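/- arXiv:1902.09367 — 8 statements merged into one kernel-verified Lean document; each statement's English description precedes it below -/
import Mathlib

section
/- Let A be a unital C*-algebra and I a closed two-sided ideal of A. If p and q are projections in A such that p − q ∈ I and ‖p − q‖ < 1, then there exists a unitary u ∈ A with u − 1 ∈ I, u q u* = p, and ‖u − 1‖ ≤ 4‖p − q‖. -/
/-!
The reflections `s = 2p - 1` and `t = 2q - 1` are self-adjoint unitaries, and `w = st` is a unitary
with `‖w - 1‖ = ‖t - s‖ = 2‖p - q‖ < 2`. Its spectrum therefore avoids the negative real axis, and
`w` has a principal square root `u`. Conjugation by `t` sends `w` to `ts = w*`, hence `u` to `u*`,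
so `u t u* = u u t = s`, which says that `u q u* = p`. Finally `u - 1 = (u + 1)⁻¹ (w - 1)` is a left
multiple of `q - p`, and `‖(u + 1)⁻¹‖ ≤ 1 / √2` because the spectrum of `u` lies in the right half
of the unit circle.
-/

section ComplexSqrt

open Complex

lemma complexSqrt_mul_self (z : ℂ) : z.sqrt * z.sqrt = z := by
  simp [Complex.sqrt, ← sq]

lemma continuousOn_complexSqrt_slitPlane : ContinuousOn Complex.sqrt slitPlane := by
  unfold Complex.sqrt
  exact continuousOn_id.cpow_const fun _ ↦ id

lemma complexSqrt_star {z : ℂ} (hz : z ∈ slitPlane) : (star z).sqrt = star z.sqrt := by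
  simpa [Complex.sqrt, conj_ofNat] using conj_cpow z 2⁻¹ (slitPlane_arg_ne_pi hz)

lemma re_complexSqrt_nonneg (z : ℂ) : 0 ≤ z.sqrt.re := by
  rw [Complex.sqrt, cpow_inv_two_re]
  positivity

lemma norm_complexSqrt (z : ℂ) : ‖z.sqrt‖ = √‖z‖ := by
  rw [eq_comm, Real.sqrt_eq_iff_mul_self_eq (norm_nonneg z) (norm_nonneg _), ← norm_mul,
    complexSqrt_mul_self]

lemma complexSqrt_add_one_ne_zero (z : ℂ) : z.sqrt + 1 ≠ 0 := fun h ↦ by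
  have hre : z.sqrt.re + 1 = 0 := by simpa using congrArg re h
  linarith [re_complexSqrt_nonneg z]

lemma sqrt_one_add_norm_le_norm_complexSqrt_add_one (z : ℂ) : √(1 + ‖z‖) ≤ ‖z.sqrt + 1‖ := by
  have hsq : ‖z.sqrt + 1‖ ^ 2 = ‖z.sqrt‖ ^ 2 + 2 * z.sqrt.re + 1 := by
    simp only [Complex.sq_norm, normSq_apply, add_re, add_im, one_re, one_im]
    ring
  refine Real.sqrt_le_left (by positivity) |>.mpr ?_
  rw [hsq, norm_complexSqrt, Real.sq_sqrt (norm_nonneg z)]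
  linarith [re_complexSqrt_nonneg z]

end ComplexSqrt

lemma mul_self_eq_one_of_mem_unitary {R : Type*} [Monoid R] [StarMul R] {s : R}
    (hs : s ∈ unitary R) (hs_sa : IsSelfAdjoint s) : s * s = 1 := by
  simpa only [hs_sa.star_eq] using Unitary.star_mul_self_of_mem hs

section PrincipalSqrt

variable {A : Type*} [TopologicalSpace A] [Ring A] [StarRing A] [Algebra ℂ A]
  [ContinuousFunctionalCalculus ℂ A IsStarNormal]

/-- The principal square root of an element `a`, given by the continuous functional calculus for the
branch of the square root on the slit plane. It has the junk value `0` unless `a` is normal and that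
branch is continuous on the spectrum of `a`. -/
noncomputable def principalSqrt (a : A) : A :=
  cfc Complex.sqrt a

lemma principalSqrt_mul_self {a : A} (ha : IsStarNormal a)
    (hspec : spectrum ℂ a ⊆ Complex.slitPlane) : principalSqrt a * principalSqrt a = a := by
  have hcont := continuousOn_complexSqrt_slitPlane.mono hspec
  rw [principalSqrt, ← cfc_mul _ _ a]
  simp only [complexSqrt_mul_self, cfc_id' ℂ a]

lemma principalSqrt_mem_unitary {u : A} (hu : u ∈ unitary A)
    (hspec : spectrum ℂ u ⊆ Complex.slitPlane) : principalSqrt u ∈ unitary A := by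
  have hnormal := isStarNormal_of_mem_unitary hu
  have hcont := continuousOn_complexSqrt_slitPlane.mono hspec
  refine (cfc_unitary_iff _ u).mpr fun z hz ↦ ?_
  have hz : ‖z‖ = 1 :=
    CStarRing.norm_of_mem_unitary (spectrum_subset_unitary_of_mem_unitary hu hz)
  rw [RCLike.star_def, RCLike.conj_mul, norm_complexSqrt, hz]
  simp

lemma map_principalSqrt {B : Type*} [TopologicalSpace B] [Ring B] [StarRing B] [Algebra ℂ B]
    [ContinuousFunctionalCalculus ℂ B IsStarNormal] [ContinuousMap.UniqueHom ℂ B]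
    (φ : A →⋆ₐ[ℂ] B) (hφ : Continuous φ) {a : A} (ha : IsStarNormal a)
    (hspec : spectrum ℂ a ⊆ Complex.slitPlane) : φ (principalSqrt a) = principalSqrt (φ a) :=
  φ.map_cfc _ a (continuousOn_complexSqrt_slitPlane.mono hspec) hφ ha (ha.map φ)

variable [ContinuousMap.UniqueHom ℂ A]

lemma principalSqrt_star {a : A} (ha : IsStarNormal a)
    (hspec : spectrum ℂ a ⊆ Complex.slitPlane) :
    principalSqrt (star a) = star (principalSqrt a) := by
  have hcont : ContinuousOn Complex.sqrt (star '' spectrum ℂ a) := by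
    refine continuousOn_complexSqrt_slitPlane.mono ?_
    rintro _ ⟨z, hz, rfl⟩
    simpa [Complex.mem_slitPlane_iff] using hspec hz
  rw [principalSqrt, principalSqrt, ← cfc_comp_star _ a, ← cfc_star]
  exact cfc_congr fun z hz ↦ complexSqrt_star (hspec hz)

variable [SeparatelyContinuousMul A]

lemma unitary_conj_principalSqrt {t : A} (ht : t ∈ unitary A) {a : A} (ha : IsStarNormal a)
    (hspec : spectrum ℂ a ⊆ Complex.slitPlane) :
    t * principalSqrt a * star t = principalSqrt (t * a * star t) := by
  let φ : A →⋆ₐ[ℂ] A := Unitary.conjStarAlgAut ℂ A ⟨t, ht⟩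
  have hφ : Continuous φ := by
    change Continuous fun x ↦ t * x * star t
    fun_prop
  exact map_principalSqrt φ hφ ha hspec

theorem principalSqrt_mul_conj_eq_left {s t : A} (hs : s ∈ unitary A) (hs_sa : IsSelfAdjoint s)
    (ht : t ∈ unitary A) (ht_sa : IsSelfAdjoint t)
    (hspec : spectrum ℂ (s * t) ⊆ Complex.slitPlane) :
    principalSqrt (s * t) * t * star (principalSqrt (s * t)) = s := by
  have hnormal : IsStarNormal (s * t) := isStarNormal_of_mem_unitary (mul_mem hs ht)
  have htt : t * t = 1 := mul_self_eq_one_of_mem_unitary ht ht_sa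
  have hconj : t * (s * t) * star t = star (s * t) := by
    simp only [star_mul, hs_sa.star_eq, ht_sa.star_eq, mul_assoc, htt, mul_one]
  set u := principalSqrt (s * t)
  have hu_star : star u = t * u * t := by
    rw [← principalSqrt_star hnormal hspec, ← hconj, ← unitary_conj_principalSqrt ht hnormal hspec,
      ht_sa.star_eq]
  calc u * t * star u = u * (t * t) * u * t := by rw [hu_star]; noncomm_ring
    _ = s * t * t := by rw [htt, mul_one, principalSqrt_mul_self hnormal hspec]
    _ = s := by rw [mul_assoc, htt, mul_one]

end PrincipalSqrt

lemma exists_principalSqrt_sub_one_eq_mul {A : Type*} [NormedRing A] [StarRing A]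
    [NormedAlgebra ℂ A] [IsometricContinuousFunctionalCalculus ℂ A IsStarNormal]
    {w : A} (hw : w ∈ unitary A) (hspec : spectrum ℂ w ⊆ Complex.slitPlane) :
    ∃ c : A, ‖c‖ ≤ (√2)⁻¹ ∧ principalSqrt w - 1 = c * (w - 1) := by
  have hnormal := isStarNormal_of_mem_unitary hw
  have hcont := continuousOn_complexSqrt_slitPlane.mono hspec
  have hcont_inv : ContinuousOn (fun z : ℂ ↦ (z.sqrt + 1)⁻¹) (spectrum ℂ w) :=
    (hcont.add continuousOn_const).inv₀ fun z _ ↦ complexSqrt_add_one_ne_zero z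
  refine ⟨cfc (fun z : ℂ ↦ (z.sqrt + 1)⁻¹) w, norm_cfc_le (by positivity) fun z hz ↦ ?_, ?_⟩
  · have hz : ‖z‖ = 1 :=
      CStarRing.norm_of_mem_unitary (spectrum_subset_unitary_of_mem_unitary hw hz)
    have hle : √2 ≤ ‖z.sqrt + 1‖ := by
      simpa [hz, one_add_one_eq_two] using sqrt_one_add_norm_le_norm_complexSqrt_add_one z
    rw [norm_inv]
    gcongr
  · have hsub : w - 1 = cfc (fun z : ℂ ↦ z - 1) w := by
      rw [cfc_sub .., cfc_id' ℂ w, cfc_const_one ℂ w]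
    have hsqrt_sub : principalSqrt w - 1 = cfc (fun z : ℂ ↦ z.sqrt - 1) w := by
      rw [cfc_sub .., cfc_const_one ℂ w, principalSqrt]
    rw [hsub, hsqrt_sub, ← cfc_mul ..]
    refine cfc_congr fun z _ ↦ ?_
    have hz := complexSqrt_add_one_ne_zero z
    rw [eq_inv_mul_iff_mul_eq₀ hz]
    linear_combination complexSqrt_mul_self z

theorem exists_unitary_conj_eq_of_norm_sub_lt_two {A : Type*} [CStarAlgebra A] {s t : A}
    (hs : s ∈ unitary A) (hs_sa : IsSelfAdjoint s) (ht : t ∈ unitary A) (ht_sa : IsSelfAdjoint t)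
    (hnorm : ‖t - s‖ < 2) :
    ∃ u ∈ unitary A, u * t * star u = s ∧ ∃ c : A, ‖c‖ ≤ (√2)⁻¹ ∧ u - 1 = c * (t - s) := by
  have hst : s * t ∈ unitary A := mul_mem hs ht
  have hst_sub : s * t - 1 = s * (t - s) := by
    rw [mul_sub, mul_self_eq_one_of_mem_unitary hs hs_sa]
  have hspec : spectrum ℂ (s * t) ⊆ Complex.slitPlane := by
    rwa [Unitary.spectrum_subset_slitPlane_iff_norm_lt_two hst, hst_sub,
      CStarRing.norm_mem_unitary_mul _ hs]
  obtain ⟨c, hc, hu_sub⟩ := exists_principalSqrt_sub_one_eq_mul hst hspec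
  refine ⟨principalSqrt (s * t), principalSqrt_mem_unitary hst hspec,
    principalSqrt_mul_conj_eq_left hs hs_sa ht ht_sa hspec, c * s, ?_, ?_⟩
  · rwa [CStarRing.norm_mul_mem_unitary _ hs]
  · rw [hu_sub, hst_sub, mul_assoc]

lemma isSelfAdjoint_two_mul_sub_one {R : Type*} [Ring R] [StarRing R] {p : R}
    (hp : IsSelfAdjoint p) : IsSelfAdjoint (2 * p - 1) := by
  rw [two_mul]
  exact (hp.add hp).sub (.one R)

lemma conj_eq_of_conj_two_mul_sub_one_eq {R : Type*} [Ring R] [StarRing R] [IsAddTorsionFree R]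
    {p q u : R} (hu : u ∈ unitary R) (h : u * (2 * q - 1) * star u = 2 * p - 1) :
    u * q * star u = p := by
  refine nsmul_right_injective two_ne_zero ?_
  calc 2 • (u * q * star u) = u * (2 * q - 1) * star u + u * star u := by noncomm_ring
    _ = 2 • p := by rw [h, Unitary.mul_star_self_of_mem hu, sub_add_cancel, two_mul, two_nsmul]

theorem projection_perturbation_unitary_general {A : Type*} [CStarAlgebra A] (I : Ideal A) {p q : A}
    (hp : IsStarProjection p) (hq : IsStarProjection q) (hpq : p - q ∈ I) (hnorm : ‖p - q‖ < 1) :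
    ∃ u ∈ unitary A, u - 1 ∈ I ∧ u * q * star u = p ∧ ‖u - 1‖ ≤ √2 * ‖p - q‖ := by
  have : IsAddTorsionFree A := .of_isTorsionFree ℂ A
  have hsub : (2 * q - 1) - (2 * p - 1) = (-2 : ℝ) • (p - q) := by rw [two_mul, two_mul]; module
  have hsub_norm : ‖(2 * q - 1) - (2 * p - 1)‖ = 2 * ‖p - q‖ := by
    rw [hsub, norm_smul, norm_neg, Real.norm_two]
  obtain ⟨u, hu, hconj, c, hc, hu_sub⟩ := exists_unitary_conj_eq_of_norm_sub_lt_two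
    hp.two_mul_sub_one_mem_unitary (isSelfAdjoint_two_mul_sub_one hp.isSelfAdjoint)
    hq.two_mul_sub_one_mem_unitary (isSelfAdjoint_two_mul_sub_one hq.isSelfAdjoint)
    (by linarith)
  refine ⟨u, hu, ?_, conj_eq_of_conj_two_mul_sub_one_eq hu hconj, ?_⟩
  · rw [hu_sub, hsub]
    exact I.mul_mem_left c (I.smul_of_tower_mem (-2 : ℝ) hpq)
  · calc ‖u - 1‖ ≤ ‖c‖ * (2 * ‖p - q‖) := by
          rw [hu_sub, ← hsub_norm]
          exact norm_mul_le _ _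
      _ ≤ (√2)⁻¹ * (2 * ‖p - q‖) := by gcongr
      _ = √2 * ‖p - q‖ := by rw [← mul_assoc, inv_mul_eq_div, Real.div_sqrt]

/-- Let `A` be a unital C*-algebra and `I` a closed two-sided ideal of `A`.
If `p` and `q` are projections in `A` such that `p - q ∈ I` and `‖p - q‖ < 1`, then there
exists a unitary `u ∈ A` with `u - 1 ∈ I`, `u q u* = p`, and `‖u - 1‖ ≤ 4‖p - q‖`. -/
theorem projection_perturbation_unitary
    {A : Type*} [CStarAlgebra A]
    (I : TwoSidedIdeal A) (hI : IsClosed (I : Set A))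
    (p q : A) (hp_sa : IsSelfAdjoint p) (hp_idem : p * p = p)
    (hq_sa : IsSelfAdjoint q) (hq_idem : q * q = q)
    (hpq : p - q ∈ I) (hnorm : ‖p - q‖ < 1) :
    ∃ u : A, u ∈ unitary A ∧ u - 1 ∈ I ∧ u * q * star u = p ∧
      ‖u - 1‖ ≤ 4 * ‖p - q‖ := by
  obtain ⟨u, hu, hu_mem, hconj, hle⟩ := projection_perturbation_unitary_general I.asIdeal
    ⟨hp_idem, hp_sa⟩ ⟨hq_idem, hq_sa⟩ (TwoSidedIdeal.mem_asIdeal.mpr hpq) hnorm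
  exact ⟨u, hu, TwoSidedIdeal.mem_asIdeal.mp hu_mem, hconj,
    hle.trans (by gcongr; linarith [Real.sqrt_two_lt_three_halves])⟩
end

section
/- Let A be a unital C*-algebra and let Z ∈ A satisfy ‖Z − 1‖ < 1. Then Z is invertible, ‖Z*Z − 1‖ ≤ 3‖Z − 1‖, ‖(Z*Z)^{1/2} − 1‖ ≤ 3‖Z − 1‖, and the unitary U := Z·(Z*Z)^{−1/2} satisfies ‖U − 1‖ ≤ 4‖Z − 1‖. -/
/-!
Expanding `Z = 1 + (Z - 1)` bounds `Z*Z - 1` by `(‖Z - 1‖ + 2) ‖Z - 1‖`. On `[0, ∞)` the function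
`x ↦ √x` is no farther from `1` than `x` is, so by functional calculus `|Z| = (Z*Z)^{1/2}` is no
farther from `1` than `Z*Z` is. Finally `U = Z |Z|⁻¹` is unitary, so `Z - U = U (|Z| - 1)` has norm
`‖|Z| - 1‖` and `‖U - 1‖ ≤ ‖Z - 1‖ + ‖|Z| - 1‖`.
-/

lemma norm_star_mul_self_sub_one_le {A : Type*} [NormedRing A] [StarRing A] [NormedStarGroup A]
    (a : A) : ‖star a * a - 1‖ ≤ (‖a - 1‖ + 2) * ‖a - 1‖ := by
  have expand : star a * a - 1 = star (a - 1) * (a - 1) + star (a - 1) + (a - 1) := by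
    rw [star_sub, star_one]
    noncomm_ring
  calc ‖star a * a - 1‖
      ≤ ‖star (a - 1) * (a - 1)‖ + ‖star (a - 1)‖ + ‖a - 1‖ := expand ▸ norm_add₃_le
    _ ≤ ‖star (a - 1)‖ * ‖a - 1‖ + ‖star (a - 1)‖ + ‖a - 1‖ := by gcongr; exact norm_mul_le _ _
    _ = (‖a - 1‖ + 2) * ‖a - 1‖ := by rw [norm_star]; ring

lemma abs_sqrt_sub_one_le {x : ℝ} (hx : 0 ≤ x) : |√x - 1| ≤ |x - 1| := by
  have factor : x - 1 = (√x - 1) * (√x + 1) := by linear_combination -Real.sq_sqrt hx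
  rw [factor, abs_mul, abs_of_pos (by positivity : 0 < √x + 1)]
  exact le_mul_of_one_le_right (abs_nonneg _) (by linarith [Real.sqrt_nonneg x])

lemma norm_cfcSqrt_sub_one_le {A : Type*} [NormedRing A] [StarRing A] [NormedAlgebra ℝ A]
    [IsometricContinuousFunctionalCalculus ℝ A IsSelfAdjoint] [PartialOrder A] [StarOrderedRing A]
    [NonnegSpectrumClass ℝ A] {a : A} (ha : 0 ≤ a) : ‖CFC.sqrt a - 1‖ ≤ ‖a - 1‖ := by
  have sqrt_sub_one : CFC.sqrt a - 1 = cfc (fun x : ℝ => √x - 1) a := by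
    rw [cfc_sub (fun x : ℝ => √x) (fun _ => 1) a, cfc_const_one ℝ a, CFC.sqrt_eq_real_sqrt a,
      cfcₙ_eq_cfc]
  have self_sub_one : a - 1 = cfc (fun x : ℝ => x - 1) a := by
    rw [cfc_sub (fun x : ℝ => x) (fun _ => 1) a, cfc_const_one ℝ a, cfc_id' ℝ a]
  rw [sqrt_sub_one]
  refine norm_cfc_le (norm_nonneg _) fun x hx => ?_
  calc ‖√x - 1‖ ≤ ‖x - 1‖ := abs_sqrt_sub_one_le (spectrum_nonneg_of_nonneg ha hx)
    _ ≤ ‖a - 1‖ := self_sub_one ▸ norm_apply_le_norm_cfc (fun x : ℝ => x - 1) a hx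

lemma norm_sub_le_of_mem_unitary {A : Type*} [NormedRing A] [StarRing A] [CStarRing A] {u : A}
    (hu : u ∈ unitary A) (s b : A) : ‖u - b‖ ≤ ‖u * s - b‖ + ‖s - 1‖ :=
  calc ‖u - b‖ = ‖(u * s - b) - u * (s - 1)‖ := by congr 1; noncomm_ring
    _ ≤ ‖u * s - b‖ + ‖u * (s - 1)‖ := norm_sub_le _ _
    _ = ‖u * s - b‖ + ‖s - 1‖ := by rw [CStarRing.norm_mem_unitary_mul _ hu]

lemma isStrictlyPositive_star_mul_self {A : Type*} [Semiring A] [StarRing A] [PartialOrder A]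
    [StarOrderedRing A] {a : A} (ha : IsUnit a) : IsStrictlyPositive (star a * a) :=
  (ha.star.mul ha).isStrictlyPositive (star_mul_self_nonneg a)

section Polar

variable {A : Type*} [Ring A] [StarRing A] [TopologicalSpace A] [IsSemitopologicalRing A]
  [T2Space A] [Algebra ℝ A] [PartialOrder A] [StarOrderedRing A] [NonnegSpectrumClass ℝ A]
  [ContinuousFunctionalCalculus ℝ A IsSelfAdjoint] {a : A}

lemma cfcRpow_neg_one_half_mul_cfcSqrt (ha : IsStrictlyPositive a) :
    CFC.rpow a (-(1 / 2) : ℝ) * CFC.sqrt a = 1 := by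
  rw [CFC.sqrt_eq_rpow]
  exact CFC.rpow_neg_mul_rpow _ ha

lemma mul_cfcRpow_neg_one_half_mul_cfcSqrt (ha : IsUnit a) :
    a * CFC.rpow (star a * a) (-(1 / 2) : ℝ) * CFC.sqrt (star a * a) = a := by
  rw [mul_assoc, cfcRpow_neg_one_half_mul_cfcSqrt (isStrictlyPositive_star_mul_self ha), mul_one]

lemma mul_cfcRpow_neg_one_half_mem_unitary (ha : IsUnit a) :
    a * CFC.rpow (star a * a) (-(1 / 2) : ℝ) ∈ unitary A := by
  have hpos : IsStrictlyPositive (star a * a) := isStrictlyPositive_star_mul_self ha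
  have hrs := cfcRpow_neg_one_half_mul_cfcSqrt hpos
  have hss := CFC.sqrt_mul_sqrt_self (star a * a) hpos.nonneg
  set r := CFC.rpow (star a * a) (-(1 / 2) : ℝ)
  set s := CFC.sqrt (star a * a)
  have hr : IsUnit r := hpos.isUnit.cfcRpow _
  have hr_star : star r = r := (IsSelfAdjoint.of_nonneg CFC.rpow_nonneg).star_eq
  have hs_star : star s = s := (IsSelfAdjoint.of_nonneg (CFC.sqrt_nonneg _)).star_eq
  have hsr : s * r = 1 := by
    simpa only [star_mul, star_one, hr_star, hs_star] using congrArg star hrs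
  refine (ha.mul hr).mem_unitary_of_star_mul_self ?_
  calc star (a * r) * (a * r) = r * (star a * a) * r := by
        simp only [star_mul, hr_star, mul_assoc]
    _ = (r * s) * (s * r) := by simp only [← hss, mul_assoc]
    _ = 1 := by rw [hrs, hsr, mul_one]

end Polar

/-- Let `A` be a unital C*-algebra and `Z ∈ A` with `‖Z − 1‖ < 1`. Then `Z` is
invertible, `‖Z*Z − 1‖ ≤ 3‖Z − 1‖`, `‖(Z*Z)^{1/2} − 1‖ ≤ 3‖Z − 1‖`, and the unitary
`U := Z (Z*Z)^{-1/2}` satisfies `‖U − 1‖ ≤ 4‖Z − 1‖`. -/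
theorem polar_decomposition_norm_estimates
    {A : Type*} [CStarAlgebra A] [PartialOrder A] [StarOrderedRing A]
    (Z : A) (hZ : ‖Z - 1‖ < 1) :
    IsUnit Z ∧
    ‖star Z * Z - 1‖ ≤ 3 * ‖Z - 1‖ ∧
    ‖CFC.sqrt (star Z * Z) - 1‖ ≤ 3 * ‖Z - 1‖ ∧
    Z * CFC.rpow (star Z * Z) (-(1 / 2) : ℝ) ∈ unitary A ∧
    ‖Z * CFC.rpow (star Z * Z) (-(1 / 2) : ℝ) - 1‖ ≤ 4 * ‖Z - 1‖ := by
  have hunit : IsUnit Z := by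
    simpa only [sub_sub_cancel] using
      isUnit_one_sub_of_norm_lt_one (x := 1 - Z) (norm_sub_rev Z 1 ▸ hZ)
  have hsq : ‖star Z * Z - 1‖ ≤ 3 * ‖Z - 1‖ :=
    (norm_star_mul_self_sub_one_le Z).trans (by gcongr; linarith)
  have hsqrt : ‖CFC.sqrt (star Z * Z) - 1‖ ≤ 3 * ‖Z - 1‖ :=
    (norm_cfcSqrt_sub_one_le (star_mul_self_nonneg Z)).trans hsq
  have hU := mul_cfcRpow_neg_one_half_mem_unitary hunit
  refine ⟨hunit, hsq, hsqrt, hU, ?_⟩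
  have hU_sub_one := norm_sub_le_of_mem_unitary hU (CFC.sqrt (star Z * Z)) 1
  rw [mul_cfcRpow_neg_one_half_mul_cfcSqrt hunit] at hU_sub_one
  linarith
end

section
/- Let D be a unital C*-algebra and A ⊆ D a unital C*-subalgebra which is simple. Suppose u ∈ D is a unitary commuting with every element of A, and u is strongly full in D. Then every nonzero element of the C*-subalgebra of D generated by A ∪ {u} is full in D. -/
/-!
The algebra generated by `S` and `u` is studied through its fibres over the points `l` of the
spectrum of `u`, obtained by dividing out the closed left ideal generated by `u - l` and its
adjoint. Simplicity of `S` gives `‖s * c‖ = ‖s‖ * ‖c‖` for `s ∈ S` and `c` commuting with `S`;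
taking for `c` bump functions of `u` shrinking to `l`, one sees that `S` embeds isometrically into
each fibre. Its image is therefore closed, and since `u` becomes a scalar, it is the whole fibre. A
nonzero `z` is nonzero in some fibre, where it agrees with a nonzero `s ∈ S`. As `S` is simple,
`1` is a limit of elements of the ideal generated by `z` modulo the fibre ideal, and multiplying by
a bump function concentrated near `l` turns this into a nonzero element of `C*(u)` inside the ideal
generated by `z`. That element is full, so `z` is full.
-/

section FunctionalCalculus

variable {D : Type*} [CStarAlgebra D]

lemma commute_cfc_of_commute {a b : D} [IsStarNormal a] (hab : Commute a b) (f : ℂ → ℂ) :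
    Commute (cfc f a) b :=
  hab.cfc (IsStarNormal.commute_star_left ‹_› hab) f

open scoped ComplexOrder in
lemma norm_mul_cfc_le_norm_mul_cfc (w : D) {a : D} {f g : ℂ → ℂ}
    (hf : ContinuousOn f (spectrum ℂ a)) (hg : ContinuousOn g (spectrum ℂ a))
    (hfg : ∀ t ∈ spectrum ℂ a, ‖f t‖ ≤ ‖g t‖) :
    ‖w * cfc f a‖ ≤ ‖w * cfc g a‖ := by
  let _ := CStarAlgebra.spectralOrder D
  have := CStarAlgebra.spectralOrderedRing D
  have hle : cfc f a * star (cfc f a) ≤ cfc g a * star (cfc g a) := by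
    rw [← cfc_star f a, ← cfc_star g a, ← cfc_mul f _ a, ← cfc_mul g _ a]
    refine cfc_mono fun t ht ↦ ?_
    simp only [RCLike.star_def, Complex.mul_conj']
    exact_mod_cast pow_le_pow_left₀ (norm_nonneg _) (hfg t ht) 2
  have hconj := star_right_conjugate_le_conjugate hle w
  have hself (b : D) : w * (b * star b) * star w = w * b * star (w * b) := by
    simp only [star_mul, mul_assoc]
  rw [hself, hself] at hconj
  have hnorm := CStarAlgebra.norm_le_norm_of_nonneg_of_le (mul_star_self_nonneg _) hconj
  rw [CStarRing.norm_self_mul_star, CStarRing.norm_self_mul_star] at hnorm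
  exact (mul_self_le_mul_self_iff (norm_nonneg _) (norm_nonneg _)).2 hnorm

lemma exists_cfc_ne_zero_forall_mul_norm_le {a : D} [IsStarNormal a] {ρ : ℝ}
    (hρ : 0 ≤ ρ) (hρa : ρ < ‖a‖) :
    ∃ f : ℂ → ℂ, cfc f a ≠ 0 ∧ ∀ w : D, ρ * ‖w * cfc f a‖ ≤ ‖w * (a * cfc f a)‖ := by
  have : Nontrivial D := ⟨a, 0, norm_pos_iff.1 (hρ.trans_lt hρa)⟩
  let f : ℂ → ℂ := fun t ↦ (max (‖t‖ - ρ) 0 : ℝ)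
  have hf : Continuous f := by fun_prop
  refine ⟨f, fun h0 ↦ ?_, fun w ↦ ?_⟩
  · obtain ⟨t, ht, hta : ‖t‖ = ‖a‖⟩ :=
      (IsometricContinuousFunctionalCalculus.isGreatest_norm_spectrum (𝕜 := ℂ) a).1
    have hft : ‖f t‖ ≤ 0 := by simpa [h0] using norm_apply_le_norm_cfc f a ht
    have hft0 : max (‖t‖ - ρ) 0 = 0 := by simpa [f] using hft
    linarith [le_max_left (‖t‖ - ρ) 0]
  · calc ρ * ‖w * cfc f a‖ = ‖w * cfc (fun t ↦ ρ * f t) a‖ := by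
          rw [cfc_const_mul (ρ : ℂ) f a, mul_smul_comm, norm_smul, Complex.norm_of_nonneg hρ]
      _ ≤ ‖w * cfc (fun t ↦ t * f t) a‖ := by
          refine norm_mul_cfc_le_norm_mul_cfc w (by fun_prop) (by fun_prop) fun t _ ↦ ?_
          rcases le_total ‖t‖ ρ with ht | ht
          · simp [f, ht]
          · rw [norm_mul, norm_mul, Complex.norm_of_nonneg hρ]
            gcongr
      _ = ‖w * (a * cfc f a)‖ := by rw [cfc_mul (fun t ↦ t) f a, cfc_id' ℂ a]

lemma exists_mem_spectrum_forall_norm_mul_norm_le_of_comm {E : Type*} [CommCStarAlgebra E]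
    (u : E) {x : E} (hx : x ≠ 0) :
    ∃ l ∈ spectrum ℂ u, ∀ f : ℂ → ℂ, ContinuousOn f (spectrum ℂ u) →
      ‖x‖ * ‖f l‖ ≤ ‖x * cfc f u‖ := by
  have : Nontrivial E := ⟨x, 0, hx⟩
  obtain ⟨t, ht, htx : ‖t‖ = ‖x‖⟩ :=
    (IsometricContinuousFunctionalCalculus.isGreatest_norm_spectrum (𝕜 := ℂ) x).1
  obtain ⟨χ, rfl⟩ := WeakDual.CharacterSpace.mem_spectrum_iff_exists.1 ht
  refine ⟨χ u, AlgHom.apply_mem_spectrum χ u, fun f hf ↦ ?_⟩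
  have hχf : χ (cfc f u) = f (χ u) := by
    rw [StarAlgHomClass.map_cfc χ f u hf (map_continuous χ),
      ← Algebra.algebraMap_self_apply (χ u), cfc_algebraMap]
    rfl
  calc ‖x‖ * ‖f (χ u)‖ = ‖χ (x * cfc f u)‖ := by rw [map_mul, norm_mul, htx, hχf]
    _ ≤ ‖x * cfc f u‖ := spectrum.norm_le_norm_of_mem (AlgHom.apply_mem_spectrum χ _)

open scoped IsMulCommutative in
lemma exists_mem_spectrum_forall_norm_mul_norm_le_of_isStarNormal {u x : D} [IsStarNormal u]
    [IsStarNormal x] (hux : Commute u x) (hx : x ≠ 0) :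
    ∃ l ∈ spectrum ℂ u, ∀ f : ℂ → ℂ, ContinuousOn f (spectrum ℂ u) →
      ‖x‖ * ‖f l‖ ≤ ‖x * cfc f u‖ := by
  let E := (StarAlgebra.adjoin ℂ {u, x}).topologicalClosure
  have hE : IsClosed (E : Set D) := StarSubalgebra.isClosed_topologicalClosure _
  have hstar_u := IsStarNormal.commute_star_left ‹_› hux
  have hstar_x := IsStarNormal.commute_star_right ‹_› hux
  have : IsMulCommutative (StarAlgebra.adjoin ℂ {u, x}) :=
    StarAlgebra.isMulCommutative_adjoin ℂ (by grind) (by grind [commute_star_comm])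
  let _ : CommRing E := StarSubalgebra.commRingTopologicalClosure _ mul_comm
  let _ : CommCStarAlgebra E := { }
  have hsub : {u, x} ⊆ (E : Set D) :=
    (StarAlgebra.subset_adjoin ℂ _).trans (StarSubalgebra.le_topologicalClosure _)
  let u' : E := ⟨u, hsub (by simp)⟩
  let x' : E := ⟨x, hsub (by simp)⟩
  have hspec : spectrum ℂ u' = spectrum ℂ u := StarSubalgebra.spectrum_eq E
  obtain ⟨l, hl, hlf⟩ := exists_mem_spectrum_forall_norm_mul_norm_le_of_comm u' (x := x')
    (by simpa [x', Subtype.ext_iff] using hx)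
  refine ⟨l, hspec ▸ hl, fun f hf ↦ ?_⟩
  have hf' : ContinuousOn f (spectrum ℂ u') := hspec ▸ hf
  have hcfc : ((cfc f u' : E) : D) = cfc f u := StarAlgHomClass.map_cfc E.subtype f u'
  rw [← hcfc]
  exact hlf f hf'

lemma exists_mem_spectrum_forall_norm_mul_norm_le {u z : D} [IsStarNormal u]
    (hzu : Commute z u) (hz : z ≠ 0) :
    ∃ l ∈ spectrum ℂ u, ∀ f : ℂ → ℂ, ContinuousOn f (spectrum ℂ u) →
      ‖z‖ * ‖f l‖ ≤ ‖z * cfc f u‖ := by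
  have hstar_z : Commute (star z) u :=
    commute_star_comm.2 (IsStarNormal.commute_star_right ‹_› hzu)
  have hnormal := (IsSelfAdjoint.star_mul_self z).isStarNormal
  obtain ⟨l, hl, hlf⟩ := exists_mem_spectrum_forall_norm_mul_norm_le_of_isStarNormal
    (hstar_z.mul_left hzu).symm (CStarRing.star_mul_self_ne_zero_iff z |>.2 hz)
  refine ⟨l, hl, fun f hf ↦ ?_⟩
  have hsq := hlf (fun t ↦ star (f t) * f t) (hf.star.mul hf)
  have hconj : star z * z * cfc (fun t ↦ star (f t) * f t) u =
      star (z * cfc f u) * (z * cfc f u) := by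
    have hcomm := (commute_cfc_of_commute (hstar_z.mul_left hzu).symm fun t ↦ star (f t)).symm
    rw [cfc_mul _ f u hf.star hf, ← mul_assoc, hcomm.eq, cfc_star, star_mul]
    simp only [mul_assoc]
  rw [hconj, CStarRing.norm_star_mul_self, CStarRing.norm_star_mul_self,
    CStarRing.norm_star_mul_self, mul_mul_mul_comm] at hsq
  exact (mul_self_le_mul_self_iff (by positivity) (norm_nonneg _)).2 hsq

lemma commute_of_mem_topologicalClosure_adjoin {s : Set D} {u z : D} [IsStarNormal u]
    (hus : ∀ x ∈ s, Commute u x) (hz : z ∈ (StarAlgebra.adjoin ℂ s).topologicalClosure) :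
    Commute u z := by
  have hle : StarAlgebra.adjoin ℂ s ≤ .centralizer ℂ {u} := StarAlgebra.adjoin_le fun x hx ↦ by
    refine StarSubalgebra.mem_centralizer_iff ℂ |>.2 ?_
    rintro _ rfl
    exact ⟨hus x hx, IsStarNormal.commute_star_left ‹_› (hus x hx)⟩
  have hz' := StarSubalgebra.topologicalClosure_minimal hle (Set.isClosed_centralizer _) hz
  exact ((StarSubalgebra.mem_centralizer_iff ℂ).1 hz' u rfl).1

end FunctionalCalculus

section TopologicallySimple

/-- A topological ring is *topologically simple* if `0` and the whole ring are its only closed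
two-sided ideals; the zero ring is allowed. -/
def IsTopologicallySimple (R : Type*) [Ring R] [TopologicalSpace R] : Prop :=
  ∀ J : TwoSidedIdeal R, IsClosed (J : Set R) → J = ⊥ ∨ J = ⊤

lemma IsTopologicallySimple.one_mem_of_mem {R σ : Type*} [Ring R] [TopologicalSpace R]
    [SetLike σ R] [SubringClass σ R] {S : σ} (hS : IsTopologicallySimple S) {I : Ideal R}
    (hI : IsClosed (I : Set R)) (hIS : ∀ x ∈ I, ∀ a ∈ S, x * a ∈ I) {s : R} (hsS : s ∈ S)
    (hsI : s ∈ I) (hs : s ≠ 0) : 1 ∈ I := by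
  let J : TwoSidedIdeal S := .mk' {a | (a : R) ∈ I} I.zero_mem I.add_mem I.neg_mem
    (fun hy ↦ I.mul_mem_left _ hy) (fun {_ y} hx ↦ hIS _ hx y y.2)
  have hmem (a : S) : a ∈ J ↔ (a : R) ∈ I := TwoSidedIdeal.mem_mk' ..
  have hJ : IsClosed (J : Set S) := by
    convert hI.preimage continuous_subtype_val using 1
    ext a
    exact hmem a
  obtain hbot | htop := hS J hJ
  · have hsJ : (⟨s, hsS⟩ : S) ∈ J := (hmem _).2 hsI
    rw [hbot, TwoSidedIdeal.mem_bot, ← Subtype.coe_inj] at hsJ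
    exact absurd hsJ hs
  · exact (hmem 1).1 (htop ▸ TwoSidedIdeal.mem_top S)

lemma IsTopologicallySimple.mul_ne_zero_of_commute {R σ : Type*} [Ring R] [TopologicalSpace R]
    [T1Space R] [ContinuousMul R] [SetLike σ R] [SubringClass σ R] {S : σ}
    (hS : IsTopologicallySimple S) {s c : R} (hsS : s ∈ S) (hs : s ≠ 0) (hc : c ≠ 0)
    (hcS : ∀ a ∈ S, Commute a c) : s * c ≠ 0 := by
  intro hsc
  have hmem (x : R) : x ∈ Ideal.torsionOf R R c ↔ x * c = 0 := Ideal.mem_torsionOf_iff c x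
  have hclosed : IsClosed (Ideal.torsionOf R R c : Set R) :=
    isClosed_singleton.preimage (continuous_mul_const c)
  have hstable : ∀ x ∈ Ideal.torsionOf R R c, ∀ a ∈ S, x * a ∈ Ideal.torsionOf R R c :=
    fun x hx a ha ↦ by
      rw [hmem] at hx ⊢
      rw [mul_assoc, (hcS a ha).eq, ← mul_assoc, hx, zero_mul]
  have h1c := (hmem 1).1 (hS.one_mem_of_mem hclosed hstable hsS ((hmem s).2 hsc) hs)
  exact hc (one_mul c ▸ h1c)

variable {D : Type*} [CStarAlgebra D] {S : StarSubalgebra ℂ D}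

lemma IsTopologicallySimple.norm_mul_of_commute_of_isStarNormal (hS : IsTopologicallySimple S)
    (hS_closed : IsClosed (S : Set D)) {q p : D} [IsStarNormal q] [IsStarNormal p] (hqS : q ∈ S)
    (hpS : ∀ a ∈ S, Commute a p) : ‖q * p‖ = ‖q‖ * ‖p‖ := by
  refine (norm_mul_le q p).antisymm ?_
  -- functional calculus cuts `q` and `p` down to where each almost attains its norm
  refine mul_le_of_forall_lt_of_nonneg (norm_nonneg _) (norm_nonneg _) fun β hβ hβq α hα hαp ↦ ?_
  obtain ⟨g, hg0, hg⟩ := exists_cfc_ne_zero_forall_mul_norm_le hβ hβq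
  obtain ⟨f, hf0, hf⟩ := exists_cfc_ne_zero_forall_mul_norm_le hα hαp
  set y := cfc g q
  set x := cfc f p
  have hyS : y ∈ S := StarAlgebra.elemental.le_of_mem hS_closed hqS (cfc_mem_elemental g q)
  have hxS (a : D) (ha : a ∈ S) : Commute a x := (commute_cfc_of_commute (hpS a ha).symm f).symm
  have hyx : 0 < ‖y * x‖ := norm_pos_iff.2 (hS.mul_ne_zero_of_commute hyS hg0 hf0 hxS)
  refine le_of_mul_le_mul_right ?_ hyx
  calc β * α * ‖y * x‖ = β * (α * ‖y * x‖) := mul_assoc ..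
    _ ≤ β * ‖y * (p * x)‖ := by gcongr; exact hf y
    _ = β * ‖p * x * y‖ := by rw [((hpS y hyS).mul_right (hxS y hyS)).eq]
    _ ≤ ‖p * x * (q * y)‖ := hg _
    _ = ‖q * p * (y * x)‖ := by
      rw [(hxS q hqS).symm.mul_mul_mul_comm, (hpS q hqS).eq, (hxS y hyS).eq]
    _ ≤ ‖q * p‖ * ‖y * x‖ := norm_mul_le ..

lemma IsTopologicallySimple.norm_mul_of_commute (hS : IsTopologicallySimple S)
    (hS_closed : IsClosed (S : Set D)) {s c : D} (hsS : s ∈ S) (hcS : ∀ a ∈ S, Commute a c) :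
    ‖s * c‖ = ‖s‖ * ‖c‖ := by
  have hstar_c (a : D) (ha : a ∈ S) : Commute a (star c) :=
    commute_star_comm.1 (hcS _ (star_mem ha))
  have hqS : star s * s ∈ S := mul_mem (star_mem hsS) hsS
  have := (IsSelfAdjoint.star_mul_self s).isStarNormal
  have := (IsSelfAdjoint.star_mul_self c).isStarNormal
  have hnorm := hS.norm_mul_of_commute_of_isStarNormal hS_closed hqS
    fun a ha ↦ (hstar_c a ha).mul_right (hcS a ha)
  have hsc : star s * s * (star c * c) = star (s * c) * (s * c) := by
    rw [← mul_assoc, (hstar_c _ hqS).eq, star_mul]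
    simp only [mul_assoc]
  rw [hsc, CStarRing.norm_star_mul_self, CStarRing.norm_star_mul_self,
    CStarRing.norm_star_mul_self, mul_mul_mul_comm] at hnorm
  exact (mul_self_inj (norm_nonneg _) (by positivity)).1 hnorm

end TopologicallySimple

section FibreIdeal

variable {D : Type*} [CStarAlgebra D] {u : D} {l : ℂ}

/-- The element `φ(u)` obtained from a smooth bump function `φ` around `l` by functional calculus.
If `u` is not normal this is the junk value `0`. -/
noncomputable def cfcBump (u : D) (φ : ContDiffBump l) : D := cfc (fun t ↦ (φ t : ℂ)) u

lemma continuous_coe_contDiffBump (φ : ContDiffBump l) : Continuous fun t ↦ (φ t : ℂ) :=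
  Complex.continuous_ofReal.comp φ.continuous

lemma norm_cfcBump_le_one (φ : ContDiffBump l) : ‖cfcBump u φ‖ ≤ 1 :=
  norm_cfc_le zero_le_one fun t _ ↦ by
    simpa [abs_of_nonneg φ.nonneg] using φ.le_one

lemma norm_cfcBump [IsStarNormal u] (hl : l ∈ spectrum ℂ u) (φ : ContDiffBump l) :
    ‖cfcBump u φ‖ = 1 := by
  refine (norm_cfcBump_le_one φ).antisymm ?_
  have hφl : φ l = 1 := φ.one_of_mem_closedBall (Metric.mem_closedBall_self φ.rIn_pos.le)
  simpa [hφl, cfcBump] using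
    norm_apply_le_norm_cfc _ u hl (continuous_coe_contDiffBump φ).continuousOn

lemma cfcBump_mul_cfcBump {φ ψ : ContDiffBump l} (h : ψ.rOut ≤ φ.rIn) :
    cfcBump u φ * cfcBump u ψ = cfcBump u ψ := by
  have hφ := (continuous_coe_contDiffBump φ).continuousOn (s := spectrum ℂ u)
  have hψ := (continuous_coe_contDiffBump ψ).continuousOn (s := spectrum ℂ u)
  rw [cfcBump, cfcBump, ← cfc_mul _ _ u hφ hψ]
  refine cfc_congr fun t _ ↦ ?_
  rcases le_total (dist t l) ψ.rOut with ht | ht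
  · simp [φ.one_of_mem_closedBall (Metric.mem_closedBall.2 (ht.trans h))]
  · simp [ψ.zero_of_le_dist ht]

lemma norm_cfc_mul_cfcBump_le {f : ℂ → ℂ} (hf : ContinuousOn f (spectrum ℂ u))
    (hfl : ∀ t ∈ spectrum ℂ u, ‖f t‖ ≤ ‖t - l‖) (φ : ContDiffBump l) :
    ‖cfc f u * cfcBump u φ‖ ≤ φ.rOut := by
  rw [cfcBump, ← cfc_mul _ _ u hf (continuous_coe_contDiffBump φ).continuousOn]
  refine norm_cfc_le φ.rOut_pos.le fun t hts ↦ ?_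
  rcases le_total (dist t l) φ.rOut with ht | ht
  · calc ‖f t * φ t‖ ≤ φ.rOut * 1 := by
          rw [norm_mul, Complex.norm_of_nonneg φ.nonneg]
          have hft : ‖f t‖ ≤ φ.rOut := (hfl t hts).trans (dist_eq_norm t l ▸ ht)
          exact mul_le_mul hft φ.le_one φ.nonneg φ.rOut_pos.le
      _ = φ.rOut := mul_one _
  · simpa [φ.zero_of_le_dist ht] using φ.rOut_pos.le

/-- The closed left ideal generated by `u - l` and its adjoint. If `u` is normal and `B` is a
C⋆-subalgebra of its commutant containing `u`, the elements of `B` lying in this ideal are those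
vanishing in the fibre of `B` over the point `l` of `spectrum ℂ u`. -/
def fibreIdeal (u : D) (l : ℂ) : Ideal D :=
  (Ideal.span {u - algebraMap ℂ D l, star (u - algebraMap ℂ D l)}).closure

lemma isClosed_fibreIdeal : IsClosed (fibreIdeal u l : Set D) := isClosed_closure

lemma sub_mem_fibreIdeal : u - algebraMap ℂ D l ∈ fibreIdeal u l :=
  subset_closure (Ideal.subset_span (by simp))

lemma star_sub_mem_fibreIdeal : star (u - algebraMap ℂ D l) ∈ fibreIdeal u l :=
  subset_closure (Ideal.subset_span (by simp))

lemma mul_mem_fibreIdeal [IsStarNormal u] {x a : D} (hx : x ∈ fibreIdeal u l)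
    (ha : Commute u a) : x * a ∈ fibreIdeal u l := by
  have hcomm : Commute (u - algebraMap ℂ D l) a := ha.sub_left (Algebra.commute_algebraMap_left l a)
  have hstar : Commute (star (u - algebraMap ℂ D l)) a := by
    rw [star_sub, ← algebraMap_star_comm]
    exact (IsStarNormal.commute_star_left ‹_› ha).sub_left (Algebra.commute_algebraMap_left _ a)
  refine map_mem_closure (f := (· * a)) (continuous_mul_const a) hx fun y hy ↦ ?_
  obtain ⟨b, c, rfl⟩ := Ideal.mem_span_pair.1 hy
  refine Ideal.mem_span_pair.2 ⟨b * a, c * a, ?_⟩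
  simp only [add_mul, mul_assoc, hcomm.eq, hstar.eq]

lemma norm_sub_mul_cfcBump_le [IsStarNormal u] (φ : ContDiffBump l) :
    ‖(u - algebraMap ℂ D l) * cfcBump u φ‖ ≤ φ.rOut := by
  have h : cfc (fun t ↦ t - l) u = u - algebraMap ℂ D l := by
    rw [cfc_sub (fun t : ℂ ↦ t) (fun _ ↦ l) u, cfc_id' ℂ u, cfc_const l u]
  exact h ▸ norm_cfc_mul_cfcBump_le (by fun_prop) (fun _ _ ↦ le_rfl) φ

lemma norm_star_sub_mul_cfcBump_le [IsStarNormal u] (φ : ContDiffBump l) :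
    ‖star (u - algebraMap ℂ D l) * cfcBump u φ‖ ≤ φ.rOut := by
  have h : cfc (fun t ↦ star (t - l)) u = star (u - algebraMap ℂ D l) := by
    rw [cfc_star, cfc_sub (fun t : ℂ ↦ t) (fun _ ↦ l) u, cfc_id' ℂ u, cfc_const l u]
  exact h ▸ norm_cfc_mul_cfcBump_le (by fun_prop) (fun _ _ ↦ (norm_star _).le) φ

lemma exists_norm_mul_cfcBump_lt [IsStarNormal u] {x : D} (hx : x ∈ fibreIdeal u l)
    {ε : ℝ} (hε : 0 < ε) :
    ∃ φ : ContDiffBump l, ‖x * cfcBump u φ‖ < ε := by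
  obtain ⟨y, hy, hxy⟩ := Metric.mem_closure_iff.1 hx (ε / 2) (half_pos hε)
  obtain ⟨b, c, rfl⟩ := Ideal.mem_span_pair.1 hy
  obtain ⟨δ, hδ, hδε⟩ := exists_pos_mul_lt (half_pos hε) (‖b‖ + ‖c‖)
  let φ : ContDiffBump l := ⟨δ / 2, δ, half_pos hδ, half_lt_self hδ⟩
  refine ⟨φ, ?_⟩
  set v := u - algebraMap ℂ D l
  have hy_small : ‖(b * v + c * star v) * cfcBump u φ‖ ≤ (‖b‖ + ‖c‖) * δ := by
    rw [add_mul, mul_assoc, mul_assoc, add_mul]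
    refine (norm_add_le _ _).trans (add_le_add ?_ ?_)
    · exact norm_mul_le_of_le le_rfl (norm_sub_mul_cfcBump_le φ)
    · exact norm_mul_le_of_le le_rfl (norm_star_sub_mul_cfcBump_le φ)
  calc ‖x * cfcBump u φ‖
      = ‖(x - (b * v + c * star v)) * cfcBump u φ + (b * v + c * star v) * cfcBump u φ‖ := by
        rw [← add_mul, sub_add_cancel]
    _ ≤ ‖x - (b * v + c * star v)‖ * 1 + (‖b‖ + ‖c‖) * δ :=
        norm_add_le_of_le (norm_mul_le_of_le le_rfl (norm_cfcBump_le_one φ)) hy_small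
    _ < ε := by linarith [dist_eq_norm x (b * v + c * star v)]

lemma exists_mem_spectrum_notMem_fibreIdeal [IsStarNormal u] {z : D} (hzu : Commute z u)
    (hz : z ≠ 0) : ∃ l ∈ spectrum ℂ u, z ∉ fibreIdeal u l := by
  obtain ⟨l, hl, hlz⟩ := exists_mem_spectrum_forall_norm_mul_norm_le hzu hz
  refine ⟨l, hl, fun hzl ↦ ?_⟩
  obtain ⟨φ, hφ⟩ := exists_norm_mul_cfcBump_lt hzl (norm_pos_iff.2 hz)
  refine hφ.not_ge ?_
  simpa [cfcBump, φ.one_of_mem_closedBall (Metric.mem_closedBall_self φ.rIn_pos.le)] using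
    hlz _ (continuous_coe_contDiffBump φ).continuousOn

lemma IsTopologicallySimple.norm_le_norm_add_of_mem_fibreIdeal [IsStarNormal u]
    {S : StarSubalgebra ℂ D} (hS : IsTopologicallySimple S) (hS_closed : IsClosed (S : Set D))
    (huS : ∀ a ∈ S, Commute u a) (hl : l ∈ spectrum ℂ u) {s r : D} (hs : s ∈ S)
    (hr : r ∈ fibreIdeal u l) : ‖s‖ ≤ ‖s + r‖ := by
  refine le_of_forall_pos_le_add fun ε hε ↦ ?_
  obtain ⟨φ, hφ⟩ := exists_norm_mul_cfcBump_lt hr hε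
  have hφS (a : D) (ha : a ∈ S) : Commute a (cfcBump u φ) :=
    (commute_cfc_of_commute (huS a ha) _).symm
  calc ‖s‖ = ‖s * cfcBump u φ‖ := by
        rw [hS.norm_mul_of_commute hS_closed hs hφS, norm_cfcBump hl, mul_one]
    _ = ‖(s + r) * cfcBump u φ - r * cfcBump u φ‖ := by rw [add_mul, add_sub_cancel_right]
    _ ≤ ‖s + r‖ * 1 + ε := norm_sub_le_of_le
        (norm_mul_le_of_le le_rfl (norm_cfcBump_le_one φ)) hφ.le
    _ = ‖s + r‖ + ε := by rw [mul_one]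

end FibreIdeal

section Fibre

lemma isClosed_sup_of_forall_norm_le_norm_add {M : Type*} [NormedAddCommGroup M]
    {S N : AddSubgroup M} [CompleteSpace S] (hN : IsClosed (N : Set M))
    (h : ∀ s ∈ S, ∀ n ∈ N, ‖s‖ ≤ ‖s + n‖) : IsClosed ((S ⊔ N : AddSubgroup M) : Set M) := by
  have hnorm (s : M) (hs : s ∈ S) : ‖(s : M ⧸ N)‖ = ‖s‖ := by
    refine QuotientAddGroup.norm_mk_le_norm.antisymm (QuotientAddGroup.le_norm_iff.2 fun m hm ↦ ?_)
    simpa using h s hs (-s + m) (QuotientAddGroup.eq.1 hm.symm)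
  have hiso : Isometry ((QuotientAddGroup.mk' N).comp S.subtype) :=
    AddMonoidHomClass.isometry_of_norm _ fun s ↦ hnorm s s.2
  have himage : IsClosed (S.map (QuotientAddGroup.mk' N) : Set (M ⧸ N)) := by
    rw [← S.range_subtype, ← AddMonoidHom.range_comp]
    exact hiso.isClosedEmbedding.isClosed_range
  have hcomap : (S.map (QuotientAddGroup.mk' N)).comap (QuotientAddGroup.mk' N) = S ⊔ N := by
    rw [AddSubgroup.comap_map_eq, QuotientAddGroup.ker_mk']
  exact hcomap ▸ himage.preimage continuous_quot_mk

variable {D : Type*} [CStarAlgebra D] {u : D} {l : ℂ}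

lemma IsTopologicallySimple.exists_add_eq_of_mem_topologicalClosure_adjoin [IsStarNormal u]
    {S : StarSubalgebra ℂ D} (hS : IsTopologicallySimple S) (hS_closed : IsClosed (S : Set D))
    (huS : ∀ a ∈ S, Commute u a) (hl : l ∈ spectrum ℂ u) {z : D}
    (hz : z ∈ (StarAlgebra.adjoin ℂ ((S : Set D) ∪ {u})).topologicalClosure) :
    ∃ s ∈ S, ∃ r ∈ fibreIdeal u l, s + r = z := by
  let T : AddSubgroup D := .ofClass S ⊔ (fibreIdeal u l).toAddSubgroup
  have hT {x : D} : x ∈ T ↔ ∃ s ∈ S, ∃ r ∈ fibreIdeal u l, s + r = x := AddSubgroup.mem_sup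
  have : CompleteSpace (AddSubgroup.ofClass S) := hS_closed.completeSpace_coe
  have hT_closed : IsClosed (T : Set D) :=
    isClosed_sup_of_forall_norm_le_norm_add isClosed_fibreIdeal
      fun s hs r hr ↦ hS.norm_le_norm_add_of_mem_fibreIdeal hS_closed huS hl hs hr
  have hST {s : D} (hs : s ∈ S) : s ∈ T := hT.2 ⟨s, hs, 0, zero_mem _, add_zero s⟩
  have hT_mul {x y : D} (hx : x ∈ T) (hy : y ∈ T) : x * y ∈ T := by
    obtain ⟨s, hs, r, hr, rfl⟩ := hT.1 hx
    obtain ⟨s', hs', r', hr', rfl⟩ := hT.1 hy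
    refine hT.2 ⟨s * s', mul_mem hs hs', r * s' + (s + r) * r', add_mem ?_ ?_, by noncomm_ring⟩
    · exact mul_mem_fibreIdeal hr (huS s' hs')
    · exact Ideal.mul_mem_left _ _ hr'
  have huT : u ∈ T := hT.2 ⟨_, algebraMap_mem S l, _, sub_mem_fibreIdeal, add_sub_cancel ..⟩
  have hstar_uT : star u ∈ T :=
    hT.2 ⟨_, star_mem (algebraMap_mem S l), _, star_sub_mem_fibreIdeal, by simp⟩
  suffices h : ∀ x ∈ StarAlgebra.adjoin ℂ ((S : Set D) ∪ {u}), x ∈ T ∧ star x ∈ T from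
    hT.1 (closure_minimal (fun x hx ↦ (h x hx).1) hT_closed hz)
  intro x hx
  induction hx using StarAlgebra.adjoin_induction with
  | mem x hx =>
    obtain hxS | rfl := hx
    exacts [⟨hST hxS, hST (star_mem hxS)⟩, ⟨huT, hstar_uT⟩]
  | algebraMap c => exact ⟨hST (algebraMap_mem S c), hST (star_mem (algebraMap_mem S c))⟩
  | add x y _ _ hx hy => exact ⟨add_mem hx.1 hy.1, star_add x y ▸ add_mem hx.2 hy.2⟩
  | mul x y _ _ hx hy => exact ⟨hT_mul hx.1 hy.1, star_mul x y ▸ hT_mul hy.2 hx.2⟩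
  | star x _ hx => exact ⟨hx.2, (star_star x).symm ▸ hx.1⟩

lemma mul_mem_closure_sup_fibreIdeal [IsStarNormal u] {J : TwoSidedIdeal D} {x a : D}
    (hx : x ∈ (J.asIdeal ⊔ fibreIdeal u l).closure) (ha : Commute u a) :
    x * a ∈ (J.asIdeal ⊔ fibreIdeal u l).closure := by
  refine map_mem_closure (f := (· * a)) (continuous_mul_const a) hx fun y hy ↦ ?_
  obtain ⟨w, hw, r, hr, rfl⟩ := Submodule.mem_sup.1 hy
  refine Submodule.mem_sup.2 ⟨w * a, ?_, r * a, mul_mem_fibreIdeal hr ha, (add_mul ..).symm⟩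
  exact TwoSidedIdeal.mem_asIdeal.2 (J.mul_mem_right _ _ (TwoSidedIdeal.mem_asIdeal.1 hw))

lemma exists_cfcBump_mem_of_one_mem_closure_sup [IsStarNormal u] {J : TwoSidedIdeal D}
    (h : 1 ∈ (J.asIdeal ⊔ fibreIdeal u l).closure) : ∃ φ : ContDiffBump l, cfcBump u φ ∈ J := by
  obtain ⟨y, hy, hy1⟩ := Metric.mem_closure_iff.1 h (1 / 2) one_half_pos
  obtain ⟨w, hw, r, hr, rfl⟩ := Submodule.mem_sup.1 hy
  obtain ⟨φ, hφ⟩ := exists_norm_mul_cfcBump_lt hr one_half_pos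
  let ψ : ContDiffBump l := ⟨φ.rIn / 2, φ.rIn, half_pos φ.rIn_pos, half_lt_self φ.rIn_pos⟩
  set b := cfcBump u φ
  have hb : b * cfcBump u ψ = cfcBump u ψ := cfcBump_mul_cfcBump le_rfl
  have hlt : ‖(1 - w) * b‖ < 1 := by
    calc ‖(1 - w) * b‖ = ‖(1 - (w + r)) * b + r * b‖ := by congr 1; noncomm_ring
      _ ≤ ‖1 - (w + r)‖ * 1 + ‖r * b‖ :=
        norm_add_le_of_le (norm_mul_le_of_le le_rfl (norm_cfcBump_le_one φ)) le_rfl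
      _ < 1 := by linarith [dist_eq_norm 1 (w + r)]
  obtain ⟨v, hv⟩ := (isUnit_one_sub_of_norm_lt_one hlt).exists_left_inv
  refine ⟨ψ, ?_⟩
  have hψ : cfcBump u ψ = v * w * cfcBump u ψ :=
    calc cfcBump u ψ = v * ((1 - (1 - w) * b) * cfcBump u ψ) := by rw [← mul_assoc, hv, one_mul]
      _ = v * w * cfcBump u ψ := by
        rw [sub_mul, mul_assoc (1 - w), hb, sub_mul, one_mul, sub_sub_cancel, mul_assoc]
  exact hψ ▸ J.mul_mem_right _ _ (J.mul_mem_left _ _ (TwoSidedIdeal.mem_asIdeal.1 hw))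

lemma IsTopologicallySimple.exists_cfcBump_mem_of_mem_sup [IsStarNormal u] {σ : Type*}
    [SetLike σ D] [SubringClass σ D] {S : σ} (hS : IsTopologicallySimple S)
    (huS : ∀ a ∈ S, Commute u a) {J : TwoSidedIdeal D} {s : D} (hsS : s ∈ S) (hs : s ≠ 0)
    (hsJ : s ∈ J.asIdeal ⊔ fibreIdeal u l) : ∃ φ : ContDiffBump l, cfcBump u φ ∈ J :=
  exists_cfcBump_mem_of_one_mem_closure_sup <| hS.one_mem_of_mem isClosed_closure
    (fun _ hx a ha ↦ mul_mem_closure_sup_fibreIdeal hx (huS a ha)) hsS (subset_closure hsJ) hs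

end Fibre

theorem strongly_full_cstar_algebra_generated_by_simple_and_unitary_general
    {D : Type*} [CStarAlgebra D] {S : StarSubalgebra ℂ D} (hS_closed : IsClosed (S : Set D))
    (hS_simple : IsTopologicallySimple S) {u : D} [IsStarNormal u]
    (hu_comm : ∀ x ∈ S, Commute u x)
    (hu_sf : ∀ y ∈ (StarAlgebra.adjoin ℂ ({u} : Set D)).topologicalClosure, y ≠ 0 →
      closure ((TwoSidedIdeal.span {y} : TwoSidedIdeal D) : Set D) = Set.univ) :
    ∀ z ∈ (StarAlgebra.adjoin ℂ ((S : Set D) ∪ {u})).topologicalClosure, z ≠ 0 →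
      closure ((TwoSidedIdeal.span {z} : TwoSidedIdeal D) : Set D) = Set.univ := by
  intro z hz hz0
  have hgen : ∀ x ∈ (S : Set D) ∪ {u}, Commute u x := by
    rintro x (hx | rfl)
    exacts [hu_comm x hx, .refl x]
  have hzu : Commute z u := (commute_of_mem_topologicalClosure_adjoin hgen hz).symm
  obtain ⟨l, hl, hzl⟩ := exists_mem_spectrum_notMem_fibreIdeal hzu hz0
  obtain ⟨s, hs, r, hr, rfl⟩ :=
    hS_simple.exists_add_eq_of_mem_topologicalClosure_adjoin hS_closed hu_comm hl hz
  have hs0 : s ≠ 0 := fun h ↦ hzl (by rwa [h, zero_add])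
  set J : TwoSidedIdeal D := .span {s + r}
  have hzJ : s + r ∈ J.asIdeal := TwoSidedIdeal.mem_asIdeal.2 (TwoSidedIdeal.subset_span rfl)
  have hsJ : s ∈ J.asIdeal ⊔ fibreIdeal u l :=
    Submodule.mem_sup.2 ⟨_, hzJ, _, neg_mem hr, add_neg_cancel_right s r⟩
  obtain ⟨φ, hφ⟩ := hS_simple.exists_cfcBump_mem_of_mem_sup hu_comm hs hs0 hsJ
  have hφ0 : cfcBump u φ ≠ 0 := norm_ne_zero_iff.1 (by simp [norm_cfcBump hl])
  have hle : TwoSidedIdeal.span {cfcBump u φ} ≤ J := TwoSidedIdeal.span_le.2 (by simpa using hφ)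
  exact Set.eq_univ_of_univ_subset
    ((hu_sf _ (cfc_mem_elemental _ u) hφ0).ge.trans (closure_mono hle))

/-- Let `D` be a unital C*-algebra and `A ⊆ D` a unital C*-subalgebra which is
simple. Suppose `u ∈ D` is a unitary commuting with every element of `A`, and `u` is strongly
full in `D`. Then every nonzero element of the C*-subalgebra of `D` generated by `A ∪ {u}` is
full in `D`. -/
theorem strongly_full_cstar_algebra_generated_by_simple_and_unitary
    {D : Type*} [CStarAlgebra D]
    (S : StarSubalgebra ℂ D) (hS_closed : IsClosed (S : Set D))
    -- `S` is simple: its only closed two-sided ideals are `0` and `S`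
    (hS_simple : ∀ J : TwoSidedIdeal S, IsClosed (J : Set S) → J = ⊥ ∨ J = ⊤)
    (u : D) (hu : u ∈ unitary D)
    (hu_comm : ∀ x ∈ S, u * x = x * u)
    -- `u` is strongly full: every nonzero element of `C*(u)` is full in `D`
    (hu_sf : ∀ y ∈ (StarAlgebra.adjoin ℂ ({u} : Set D)).topologicalClosure, y ≠ 0 →
      closure ((TwoSidedIdeal.span {y} : TwoSidedIdeal D) : Set D) = Set.univ) :
    ∀ z ∈ (StarAlgebra.adjoin ℂ ((S : Set D) ∪ {u})).topologicalClosure, z ≠ 0 →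
      closure ((TwoSidedIdeal.span {z} : TwoSidedIdeal D) : Set D) = Set.univ := by
  have := isStarNormal_of_mem_unitary hu
  exact strongly_full_cstar_algebra_generated_by_simple_and_unitary_general hS_closed hS_simple
    hu_comm hu_sf
end

section
/- Let M be a unital C*-algebra, N a C*-algebra, and π : M → N a surjective *-homomorphism with kernel B. Let (e_n)_{n≥1} be an increasing sequence of projections in B forming an approximate unit for B (i.e., e_n b → b for all b ∈ B), and set e_0 = 0. Suppose A, A', A'' ∈ N are positive contractions and δ > 0 are such that A·A' = A' and A'' lies in the norm closure of { (A'−δ)₊ · y · (A'−δ)₊ : y ∈ N }. Let A₀ ∈ M be a contraction with π(A₀) = A and let ε > 0. Then for every natural number M₀ ≥ 0 there exists a positive contraction A''₀ ∈ M with A''₀ = (1−e_{M₀})·A''₀·(1−e_{M₀}), π(A''₀) = A'', and such that for all integers l ≥ 1, ‖A₀·(A''₀)^{1/l} − (A''₀)^{1/l}‖ < ε and ‖(A''₀)^{1/l}·A₀ − (A''₀)^{1/l}‖ < ε. -/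
/-!
Functional calculus of `A'` gives a positive contraction `g` that is a unit for `A''` and is
annihilated by `A - 1`. Let `x` be a lift of `g` orthogonal to the projection `p = e M₀`. Both
`(A₀ - 1) * x` and `x * (A₀ - 1)` lie in `ker π`, so an element `u` of an approximate unit of
`ker π` makes `y = x * (1 - u) * x` almost annihilated by `A₀ - 1`, while `π y = g * g` is still a
unit for `A''`. Cut a lift `d` of `A''` down to `c = f(y) * d * f(y)`, where `f` vanishes on
`[0, 1/2]` and `f 1 = 1`. Then `y` is invertible on the support of `f(y)`: some `m` with `‖m‖ ≤ 2`
satisfies `y * m * c = c`, hence `y * m * c ^ r = c ^ r` for every `r > 0`. Therefore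
`‖(A₀ - 1) * c ^ r‖ ≤ 2 * ‖(A₀ - 1) * y‖`, a bound that does not depend on `r`.
-/

open Filter Set Topology

section ContinuousFunctionalCalculus

theorem mem_spectrum_of_mul_eq_smul {R A : Type*} [CommRing R] [Ring A] [Algebra R A] {a z : A}
    {r : R} (hz : z ≠ 0) (h : a * z = r • z) : r ∈ spectrum R a := by
  intro hunit
  refine hz (hunit.mul_right_eq_zero.mp ?_)
  rw [sub_mul, h, Algebra.smul_def, sub_self]

theorem cfc_mul_cfc_eq_right {R A : Type*} {p : A → Prop} [CommSemiring R] [StarRing R]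
    [MetricSpace R] [IsTopologicalSemiring R] [ContinuousStar R] [TopologicalSpace A] [Ring A]
    [StarRing A] [Algebra R A] [ContinuousFunctionalCalculus R A p] {a : A} {f g : R → R}
    (hg : ContinuousOn g (spectrum R a)) (hf : ContinuousOn f (spectrum R a))
    (h : ∀ t ∈ spectrum R a, f t ≠ 0 → g t = 1) :
    cfc g a * cfc f a = cfc f a := by
  rw [← cfc_mul g f a hg hf]
  refine cfc_congr fun t ht => ?_
  obtain hft | hft := eq_or_ne (f t) 0
  · rw [hft, mul_zero]
  · rw [h t ht hft, one_mul]

variable {A : Type*} [Ring A] [StarRing A] [Algebra ℝ A] [TopologicalSpace A]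
  [IsTopologicalRing A] [ContinuousSMul ℝ A] [T2Space A]
  [ContinuousFunctionalCalculus ℝ A IsSelfAdjoint] {a z : A} {r : ℝ} {f : ℝ → ℝ}

open scoped ContinuousFunctionalCalculus in
theorem cfcHom_mul_eq_smul_of_mul_eq_smul (ha : IsSelfAdjoint a) (g : C(spectrum ℝ a, ℝ))
    (x : spectrum ℝ a) (h : a * z = (x : ℝ) • z) : cfcHom ha g * z = g x • z := by
  induction g using ContinuousMap.induction_on_of_compact with
  | const s =>
    exact (congrArg (· * z) (AlgHomClass.commutes (cfcHom ha) s)).trans (Algebra.smul_def s z).symm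
  | id => rwa [cfcHom_id ha]
  | star_id => rwa [map_star, cfcHom_id ha, ha.star_eq]
  | add g₁ g₂ h₁ h₂ => rw [map_add, add_mul, h₁, h₂, ContinuousMap.add_apply, add_smul]
  | mul g₁ g₂ h₁ h₂ =>
    rw [map_mul, mul_assoc, h₂, mul_smul_comm, h₁, smul_smul, mul_comm, ContinuousMap.mul_apply]
  | frequently g hg =>
    have hclosed : IsClosed {g | cfcHom ha g * z = g x • z} :=
      isClosed_eq ((cfcHom_continuous ha).mul_const z)
        ((continuous_eval_const x).smul continuous_const)
    exact hclosed.mem_of_frequently_of_tendsto hg tendsto_id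

theorem cfc_mul_eq_smul_of_mul_eq_smul (ha : IsSelfAdjoint a)
    (hf : ContinuousOn f (spectrum ℝ a)) (h : a * z = r • z) : cfc f a * z = f r • z := by
  obtain rfl | hz := eq_or_ne z 0
  · rw [mul_zero, smul_zero]
  · rw [cfc_apply f a ha hf]
    exact cfcHom_mul_eq_smul_of_mul_eq_smul ha _ ⟨r, mem_spectrum_of_mul_eq_smul hz h⟩ h

theorem mul_cfc_eq_smul_of_mul_eq_smul [StarModule ℝ A] (ha : IsSelfAdjoint a)
    (hf : ContinuousOn f (spectrum ℝ a)) (h : z * a = r • z) : z * cfc f a = f r • z := by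
  have hstar : a * star z = r • star z := by
    simpa only [star_mul, ha.star_eq, star_smul, star_trivial] using congrArg star h
  simpa only [star_mul, star_star, star_smul, star_trivial, (cfc_predicate f a).star_eq] using
    congrArg star (cfc_mul_eq_smul_of_mul_eq_smul ha hf hstar)

end ContinuousFunctionalCalculus

theorem exists_mem_nonneg_norm_sub_mul_lt {A : Type*} [NonUnitalCStarAlgebra A] [PartialOrder A]
    [StarOrderedRing A] (S : NonUnitalStarSubalgebra ℂ A) (hS : IsClosed (S : Set A)) {x y : A}
    (hx : x ∈ S) (hy : y ∈ S) {ε : ℝ} (hε : 0 < ε) :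
    ∃ e ∈ S, 0 ≤ e ∧ ‖e‖ ≤ 1 ∧ ‖x - e * x‖ < ε ∧ ‖y - y * e‖ < ε := by
  let : PartialOrder S := CStarAlgebra.spectralOrder S
  have : StarOrderedRing S := CStarAlgebra.spectralOrderedRing S
  have hunit := CStarAlgebra.increasingApproximateUnit S
  have hlim {s : S} {φ : S → S} (h : Tendsto φ (CStarAlgebra.approximateUnit S) (𝓝 s)) :
      ∀ᶠ e in CStarAlgebra.approximateUnit S, ‖s - φ e‖ < ε := by
    simpa only [dist_eq_norm'] using h.eventually (Metric.ball_mem_nhds _ hε)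
  obtain ⟨e, he0, he1, hxe, hye⟩ := (hunit.eventually_nonneg.and <| hunit.eventually_norm.and <|
    (hlim (hunit.tendsto_mul_right ⟨x, hx⟩)).and (hlim (hunit.tendsto_mul_left ⟨y, hy⟩))).exists
  obtain ⟨u, rfl⟩ := CStarAlgebra.nonneg_iff_eq_star_mul_self.mp he0
  exact ⟨_, (star u * u).2, star_mul_self_nonneg (u : A), he1, hxe, hye⟩

theorem exists_mul_mul_cfc_eq_cfc {A : Type*} [CStarAlgebra A] {y : A} (hy : IsSelfAdjoint y)
    {f : ℝ → ℝ} (hf : ContinuousOn f (spectrum ℝ y)) {κ : ℝ} (hκ : 0 < κ)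
    (h : ∀ t < κ, f t = 0) : ∃ m, ‖m‖ ≤ κ⁻¹ ∧ y * m * cfc f y = cfc f y := by
  have hpos (t : ℝ) : 0 < max t κ := lt_max_of_lt_right hκ
  have hcont : Continuous fun t : ℝ => (max t κ)⁻¹ :=
    (continuous_id.max continuous_const).inv₀ fun t => (hpos t).ne'
  refine ⟨cfc (fun t : ℝ => (max t κ)⁻¹) y, norm_cfc_le (by positivity) fun t _ => ?_, ?_⟩
  · rw [norm_inv, Real.norm_of_nonneg (hpos t).le]
    exact inv_anti₀ hκ (le_max_right t κ)
  · have hprod : y * cfc (fun t : ℝ => (max t κ)⁻¹) y = cfc (fun t : ℝ => t * (max t κ)⁻¹) y := by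
      rw [cfc_mul (fun t : ℝ => t) _ y continuousOn_id hcont.continuousOn, cfc_id' ℝ y]
    rw [hprod]
    refine cfc_mul_cfc_eq_right (continuous_id.mul hcont).continuousOn hf fun t _ ht => ?_
    have hκt : κ ≤ t := not_lt.mp fun hlt => ht (h t hlt)
    rw [max_eq_left hκt, mul_inv_cancel₀ (hκ.trans_le hκt).ne']

section UnitInterval

variable {A : Type*} [CStarAlgebra A] [PartialOrder A] [StarOrderedRing A] {a c x : A}

theorem conjugate_mem_Icc (ha : IsSelfAdjoint a) (ha1 : ‖a‖ ≤ 1) (hx : x ∈ Icc 0 1) :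
    a * x * a ∈ Icc 0 1 := by
  rw [CStarAlgebra.mem_Icc_iff_norm_le_one] at hx ⊢
  refine ⟨ha.conjugate_nonneg hx.1, norm_mul₃_le.trans ?_⟩
  exact mul_le_one₀ (mul_le_one₀ ha1 (norm_nonneg _) hx.2) (norm_nonneg _) ha1

theorem cfc_mem_Icc {f : ℝ → ℝ} (hf : ∀ t ∈ spectrum ℝ a, f t ∈ Icc 0 1) :
    cfc f a ∈ Icc 0 1 :=
  ⟨cfc_nonneg fun t ht => (hf t ht).1, cfc_le_one f a fun t ht => (hf t ht).2⟩

theorem spectrum_subset_Icc (ha : a ∈ Icc 0 1) : spectrum ℝ a ⊆ Icc 0 1 := fun t ht =>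
  ⟨spectrum_nonneg_of_nonneg ha.1 ht,
    (CFC.le_one_iff a (.of_nonneg ha.1)).mp ha.2 t ht⟩

theorem mul_rpow_eq_right (hc : 0 ≤ c) {r : ℝ} (hr : 0 < r) (h : a * c = c) :
    a * c ^ r = c ^ r := by
  have hcont : ContinuousOn (fun t : ℝ => t ^ r) (spectrum ℝ c) :=
    (Real.continuous_rpow_const hr.le).continuousOn
  have hzero : (a - 1) * c = (0 : ℝ) • (a - 1) := by
    rw [sub_mul, h, one_mul, sub_self, zero_smul]
  rw [← sub_eq_zero, ← sub_one_mul, CFC.rpow_eq_cfc_real hc,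
    mul_cfc_eq_smul_of_mul_eq_smul (.of_nonneg hc) hcont hzero, Real.zero_rpow hr.ne', zero_smul]

theorem norm_mul_rpow_le {y m : A} (hc : 0 ≤ c) (hc1 : ‖c‖ ≤ 1) (h : y * m * c = c) (b : A)
    {r : ℝ} (hr : 0 < r) : ‖b * c ^ r‖ ≤ ‖b * y‖ * ‖m‖ := by
  have hroot : ‖c ^ r‖ ≤ 1 := by
    rw [CFC.norm_rpow c hr hc]
    exact Real.rpow_le_one (norm_nonneg c) hc1 hr.le
  calc ‖b * c ^ r‖ = ‖b * y * m * c ^ r‖ := by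
        rw [mul_assoc b, mul_assoc b, mul_rpow_eq_right hc hr h]
    _ ≤ ‖b * y‖ * ‖m‖ * ‖c ^ r‖ := norm_mul₃_le
    _ ≤ ‖b * y‖ * ‖m‖ := mul_le_of_le_one_right (by positivity) hroot

theorem exists_mem_Icc_mul_eq_of_mem_closure {z : A} (ha : IsSelfAdjoint a) {δ : ℝ}
    (hδ : 0 < δ) (hxa : x * a = 0) (hax : a * x = 0)
    (hz : z ∈ closure {z : A | ∃ y : A,
      z = cfc (fun t : ℝ => max (t - δ) 0) a * y * cfc (fun t : ℝ => max (t - δ) 0) a}) :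
    ∃ g ∈ Icc (0 : A) 1, x * g = 0 ∧ g * x = 0 ∧ g * z = z := by
  let ramp : ℝ → ℝ := fun t => max 0 (min (t / δ) 1)
  have hramp : Continuous ramp := by fun_prop
  have hramp0 : ramp 0 = 0 := by simp [ramp]
  refine ⟨cfc ramp a, cfc_mem_Icc fun t _ => by simp [ramp], ?_, ?_, ?_⟩
  · rw [mul_cfc_eq_smul_of_mul_eq_smul (r := 0) ha hramp.continuousOn (by rw [hxa, zero_smul]),
      hramp0, zero_smul]
  · rw [cfc_mul_eq_smul_of_mul_eq_smul (r := 0) ha hramp.continuousOn (by rw [hax, zero_smul]),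
      hramp0, zero_smul]
  · have hunit : cfc ramp a * cfc (fun t : ℝ => max (t - δ) 0) a =
        cfc (fun t : ℝ => max (t - δ) 0) a := by
      refine cfc_mul_cfc_eq_right hramp.continuousOn (by fun_prop) fun t _ ht => ?_
      have hδt : δ ≤ t := by
        by_contra! hlt
        exact ht (max_eq_right (by linarith))
      simp [ramp, (one_le_div hδ).mpr hδt]
    have hclosed : IsClosed {z | cfc ramp a * z = z} :=
      isClosed_eq (continuous_const_mul _) continuous_id
    refine closure_minimal ?_ hclosed hz
    rintro _ ⟨y, rfl⟩
    simp only [mem_ofPred_eq, ← mul_assoc, hunit]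

end UnitInterval

section Lifting

variable {M N : Type*} [CStarAlgebra M] [PartialOrder M] [StarOrderedRing M]
  [CStarAlgebra N] [PartialOrder N] [StarOrderedRing N] {π : M →⋆ₐ[ℂ] N}

open scoped ComplexStarModule in
theorem exists_mem_Icc_map_eq (hπ : Function.Surjective π) {z : N} (hz : z ∈ Icc 0 1) :
    ∃ d ∈ Icc (0 : M) 1, π d = z := by
  obtain ⟨b, rfl⟩ := hπ z
  have hsa := IsSelfAdjoint.of_nonneg hz.1
  obtain ⟨s, hs, hπs⟩ : ∃ s : M, IsSelfAdjoint s ∧ π s = π b :=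
    ⟨ℜ b, (ℜ b).2, by rw [map_realPart, hsa.coe_realPart]⟩
  let clamp : ℝ → ℝ := fun t => max 0 (min t 1)
  have hclamp : Continuous clamp := by fun_prop
  refine ⟨cfc clamp s, cfc_mem_Icc fun t _ => by simp [clamp], ?_⟩
  rw [π.map_cfc clamp s hclamp.continuousOn (by fun_prop) hs (hs.map π), hπs]
  refine (cfc_congr fun t ht => ?_).trans (cfc_id' ℝ (π b))
  obtain ⟨ht0, ht1⟩ := spectrum_subset_Icc hz ht
  exact (congrArg (max 0) (min_eq_left ht1)).trans (max_eq_right ht0)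

theorem exists_mem_Icc_mul_eq_zero_map_eq (hπ : Function.Surjective π) {p : M}
    (hp : IsStarProjection p) (hπp : π p = 0) {z : N} (hz : z ∈ Icc 0 1) :
    ∃ x ∈ Icc (0 : M) 1, p * x = 0 ∧ π x = z := by
  obtain ⟨d, hd, rfl⟩ := exists_mem_Icc_map_eq hπ hz
  refine ⟨(1 - p) * d * (1 - p),
    conjugate_mem_Icc hp.one_sub.isSelfAdjoint hp.one_sub.norm_le hd, ?_, ?_⟩
  · rw [← mul_assoc, ← mul_assoc, hp.mul_one_sub_self, zero_mul, zero_mul]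
  · rw [map_mul, map_mul, map_sub, map_one, hπp, sub_zero, one_mul, mul_one]

theorem exists_mem_Icc_map_eq_mul_self_norm_mul_lt (hπ : Function.Surjective π) {p : M}
    (hp : IsStarProjection p) (hπp : π p = 0) {b : M} {g : N} (hg : g ∈ Icc 0 1)
    (hbg : π b * g = 0) (hgb : g * π b = 0) {ε : ℝ} (hε : 0 < ε) :
    ∃ y ∈ Icc (0 : M) 1, p * y = 0 ∧ π y = g * g ∧ ‖b * y‖ < ε ∧ ‖y * b‖ < ε := by
  obtain ⟨x, hx, hpx, rfl⟩ := exists_mem_Icc_mul_eq_zero_map_eq hπ hp hπp hg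
  let S : NonUnitalStarSubalgebra ℂ M := NonUnitalStarAlgHom.equalizer (π : M →⋆ₙₐ[ℂ] N) 0
  have hS : IsClosed (S : Set M) := isClosed_eq (by fun_prop) continuous_const
  have hxb : x * b ∈ S := (map_mul π x b).trans hgb
  have hbx : b * x ∈ S := (map_mul π b x).trans hbg
  obtain ⟨e, he, he0, he1, hxe, hye⟩ := exists_mem_nonneg_norm_sub_mul_lt S hS hxb hbx hε
  have hπe : π e = 0 := he
  have hx1 := (CStarAlgebra.mem_Icc_iff_norm_le_one.mp hx).2
  have hxsa := IsSelfAdjoint.of_nonneg hx.1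
  have he_one : 1 - e ∈ Icc 0 1 := by
    obtain ⟨_, he_le⟩ := CStarAlgebra.mem_Icc_iff_norm_le_one.mpr ⟨he0, he1⟩
    exact ⟨sub_nonneg.mpr he_le, sub_le_self 1 he0⟩
  refine ⟨x * (1 - e) * x, conjugate_mem_Icc hxsa hx1 he_one, ?_, ?_, ?_, ?_⟩
  · rw [← mul_assoc, ← mul_assoc, hpx, zero_mul, zero_mul]
  · rw [map_mul, map_mul, map_sub, map_one, hπe, sub_zero, mul_one]
  · calc ‖b * (x * (1 - e) * x)‖ = ‖(b * x - b * x * e) * x‖ := by congr 1; noncomm_ring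
      _ ≤ ‖b * x - b * x * e‖ * ‖x‖ := norm_mul_le _ _
      _ ≤ ‖b * x - b * x * e‖ := mul_le_of_le_one_right (norm_nonneg _) hx1
      _ < ε := hye
  · calc ‖x * (1 - e) * x * b‖ = ‖x * (x * b - e * (x * b))‖ := by congr 1; noncomm_ring
      _ ≤ ‖x‖ * ‖x * b - e * (x * b)‖ := norm_mul_le _ _
      _ ≤ ‖x * b - e * (x * b)‖ := mul_le_of_le_one_left (norm_nonneg _) hx1
      _ < ε := hxe

theorem exists_map_eq_norm_mul_rpow_le (hπ : Function.Surjective π) {y : M} (hy : y ∈ Icc 0 1)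
    {z : N} (hz : z ∈ Icc 0 1) (hyz : π y * z = z) :
    ∃ c ∈ Icc (0 : M) 1, π c = z ∧ ∀ b : M, ∀ r : ℝ, 0 < r →
      ‖b * c ^ r‖ ≤ 2 * ‖b * y‖ ∧ ‖c ^ r * b‖ ≤ 2 * ‖y * b‖ := by
  obtain ⟨d, hd, rfl⟩ := exists_mem_Icc_map_eq hπ hz
  have hysa := IsSelfAdjoint.of_nonneg hy.1
  have hzsa := IsSelfAdjoint.of_nonneg hz.1
  let φ : ℝ → ℝ := fun t => max 0 (2 * t - 1)
  have hφ : Continuous φ := by fun_prop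
  have hφy : cfc φ y ∈ Icc 0 1 := cfc_mem_Icc fun t ht => by
    have := (spectrum_subset_Icc hy ht).2
    exact ⟨le_max_left _ _, max_le zero_le_one (by linarith)⟩
  have hφsa : IsSelfAdjoint (cfc φ y) := cfc_predicate φ y
  have hπφ : π (cfc φ y) * π d = π d := by
    rw [π.map_cfc φ y hφ.continuousOn (by fun_prop) hysa (hysa.map π),
      cfc_mul_eq_smul_of_mul_eq_smul (r := 1) (hysa.map π) hφ.continuousOn (by rwa [one_smul])]
    norm_num [φ]
  have hφπ : π d * π (cfc φ y) = π d := by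
    simpa only [star_mul, hzsa.star_eq, (hφsa.map π).star_eq] using congrArg star hπφ
  obtain ⟨m, hm, hym⟩ : ∃ m, ‖m‖ ≤ (2⁻¹ : ℝ)⁻¹ ∧ y * m * cfc φ y = cfc φ y :=
    exists_mul_mul_cfc_eq_cfc hysa hφ.continuousOn (by norm_num) fun t ht =>
      max_eq_left (by linarith)
  rw [inv_inv] at hm
  have hc : cfc φ y * d * cfc φ y ∈ Icc 0 1 :=
    conjugate_mem_Icc hφsa (CStarAlgebra.mem_Icc_iff_norm_le_one.mp hφy).2 hd
  have hleft (b : M) {r : ℝ} (hr : 0 < r) :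
      ‖b * (cfc φ y * d * cfc φ y) ^ r‖ ≤ 2 * ‖b * y‖ := by
    refine (norm_mul_rpow_le hc.1 (CStarAlgebra.mem_Icc_iff_norm_le_one.mp hc).2
      (y := y) (m := m) ?_ b hr).trans ?_
    · rw [← mul_assoc, ← mul_assoc, hym]
    · rw [mul_comm]; gcongr
  refine ⟨_, hc, by rw [map_mul, map_mul, hπφ, hφπ], fun b r hr => ⟨hleft b hr, ?_⟩⟩
  have hroot : IsSelfAdjoint ((cfc φ y * d * cfc φ y) ^ r) := .of_nonneg CFC.rpow_nonneg
  rw [← norm_star, ← norm_star (y * b), star_mul, star_mul, hroot.star_eq, hysa.star_eq]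
  exact hleft (star b) hr

theorem lift_in_corner_almost_commuting_general (hπ : Function.Surjective π) {p : M}
    (hp : IsStarProjection p) (hπp : π p = 0) {A A' A'' : N} (hA' : IsSelfAdjoint A')
    (hAA' : A * A' = A') (hA'A : A' * A = A') (hA'' : 0 ≤ A'') (hA''_norm : ‖A''‖ ≤ 1)
    {δ : ℝ} (hδ : 0 < δ)
    (hA''_her : A'' ∈ closure {z : N | ∃ y : N,
      z = cfc (fun t : ℝ => max (t - δ) 0) A' * y * cfc (fun t : ℝ => max (t - δ) 0) A'})
    {A₀ : M} (hA₀_lift : π A₀ = A) {ε : ℝ} (hε : 0 < ε) :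
    ∃ A''₀ : M, 0 ≤ A''₀ ∧ ‖A''₀‖ ≤ 1 ∧ A''₀ = (1 - p) * A''₀ * (1 - p) ∧ π A''₀ = A'' ∧
      ∀ r : ℝ, 0 < r → ‖A₀ * A''₀ ^ r - A''₀ ^ r‖ < ε ∧ ‖A''₀ ^ r * A₀ - A''₀ ^ r‖ < ε := by
  have hb : π (A₀ - 1) = A - 1 := by rw [map_sub, map_one, hA₀_lift]
  obtain ⟨g, hg, hbg, hgb, hgA''⟩ := exists_mem_Icc_mul_eq_of_mem_closure hA' hδ
    (show (A - 1) * A' = 0 by rw [sub_mul, hAA', one_mul, sub_self])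
    (show A' * (A - 1) = 0 by rw [mul_sub, hA'A, mul_one, sub_self]) hA''_her
  rw [← hb] at hbg hgb
  obtain ⟨y, hy, hpy, hπy, hby, hyb⟩ :=
    exists_mem_Icc_map_eq_mul_self_norm_mul_lt hπ hp hπp hg hbg hgb (half_pos hε)
  obtain ⟨c, hc, hπc, hroot⟩ := exists_map_eq_norm_mul_rpow_le hπ hy
    (CStarAlgebra.mem_Icc_iff_norm_le_one.mpr ⟨hA'', hA''_norm⟩)
    (show π y * A'' = A'' by rw [hπy, mul_assoc, hgA'', hgA''])
  obtain ⟨hc0, hc1⟩ := CStarAlgebra.mem_Icc_iff_norm_le_one.mp hc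
  have hyp : y * p = 0 := by
    simpa [(IsSelfAdjoint.of_nonneg hy.1).star_eq, hp.isSelfAdjoint.star_eq] using congrArg star hpy
  have hpc := hroot p 1 one_pos
  simp only [CFC.rpow_one c hc0, hpy, hyp, norm_zero, mul_zero, norm_le_zero_iff] at hpc
  refine ⟨c, hc0, hc1, ?_, hπc, fun r hr => ?_⟩
  · rw [one_sub_mul, hpc.1, sub_zero, mul_one_sub, hpc.2, sub_zero]
  · rw [← sub_one_mul, ← mul_sub_one]
    exact ⟨(hroot (A₀ - 1) r hr).1.trans_lt (by linarith),
      (hroot (A₀ - 1) r hr).2.trans_lt (by linarith)⟩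

end Lifting

/-- (Paper's Lemma 4.1, with the corona algebra replaced by the codomain of a
surjective *-homomorphism `π` with kernel `B`.) Given an increasing approximate unit of
projections `(e n)` for the kernel of `π`, positive contractions `A, A', A'' ∈ N` with
`A A' = A'` and `A''` in the hereditary subalgebra generated by `(A' − δ)₊`, a contractive lift
`A₀` of `A`, and `ε > 0`, for every `M₀` there is a positive contractive lift `A''₀` of `A''`
in the corner `(1 − e M₀) M (1 − e M₀)` such that `A₀` almost commutes with all roots
`(A''₀)^{1/l}` up to `ε`. -/
theorem lift_in_corner_almost_commuting
    {M N : Type*} [CStarAlgebra M] [PartialOrder M] [StarOrderedRing M]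
    [CStarAlgebra N] [PartialOrder N] [StarOrderedRing N]
    (π : M →⋆ₐ[ℂ] N) (hπ : Function.Surjective π)
    (e : ℕ → M) (he0 : e 0 = 0)
    (he_sa : ∀ n, IsSelfAdjoint (e n)) (he_idem : ∀ n, e n * e n = e n)
    (he_mono : Monotone e)
    (he_ker : ∀ n, π (e n) = 0)
    (he_approx : ∀ b : M, π b = 0 →
      Filter.Tendsto (fun n => e n * b) Filter.atTop (nhds b))
    (A A' A'' : N)
    (hA : 0 ≤ A) (hA_norm : ‖A‖ ≤ 1)
    (hA' : 0 ≤ A') (hA'_norm : ‖A'‖ ≤ 1)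
    (hA'' : 0 ≤ A'') (hA''_norm : ‖A''‖ ≤ 1)
    (δ : ℝ) (hδ : 0 < δ)
    (hAA' : A * A' = A')
    (hA''_her : A'' ∈ closure {z : N | ∃ y : N,
      z = cfc (fun t : ℝ => max (t - δ) 0) A' * y * cfc (fun t : ℝ => max (t - δ) 0) A'})
    (A₀ : M) (hA₀_norm : ‖A₀‖ ≤ 1) (hA₀_lift : π A₀ = A)
    (ε : ℝ) (hε : 0 < ε) :
    ∀ M₀ : ℕ, ∃ A''₀ : M, 0 ≤ A''₀ ∧ ‖A''₀‖ ≤ 1 ∧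
      A''₀ = (1 - e M₀) * A''₀ * (1 - e M₀) ∧
      π A''₀ = A'' ∧
      ∀ l : ℕ, 1 ≤ l →
        ‖A₀ * CFC.rpow A''₀ ((l : ℝ)⁻¹) - CFC.rpow A''₀ ((l : ℝ)⁻¹)‖ < ε ∧
        ‖CFC.rpow A''₀ ((l : ℝ)⁻¹) * A₀ - CFC.rpow A''₀ ((l : ℝ)⁻¹)‖ < ε := by
  intro M₀
  have hA'A : A' * A = A' := by
    simpa only [star_mul, (IsSelfAdjoint.of_nonneg hA).star_eq,
      (IsSelfAdjoint.of_nonneg hA').star_eq] using congrArg star hAA'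
  obtain ⟨c, hc, hc1, hcorner, hlift, hroot⟩ := lift_in_corner_almost_commuting_general hπ
    ⟨he_idem M₀, he_sa M₀⟩ (he_ker M₀) (.of_nonneg hA') hAA' hA'A hA'' hA''_norm hδ hA''_her
    hA₀_lift hε
  exact ⟨c, hc, hc1, hcorner, hlift, fun l hl => hroot _ (inv_pos.mpr (Nat.cast_pos.mpr hl))⟩
end

section
/- Let C be a unital C*-algebra and A ⊆ C a unital C*-subalgebra. Suppose there exists v ∈ M₂(C) with v*v = 1_{M₂(C)} and v·diag(x, x)·v* = diag(x, 0) for all x ∈ A. Then vv* = diag(1, 0), every matrix entry of v lies in the relative commutant D := { c ∈ C : cx = xc for all x ∈ A }, and in M₂(D) the projection diag(1, 1) is Murray–von Neumann equivalent to diag(1, 0); in particular the unit of D is properly infinite. -/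
/-!
If `u * v = 1`, then `v * a * u = b` gives `v * a = b * v` and `a * u = u * b`. Read entrywise for
`a = diag(x, x)` and `b = diag(x, 0)`, these say that the entries in the first row of `v` commute
with `x` and, at `x = 1`, that the second row of `v` vanishes; likewise for the columns of `u`.
Taking `u = v*`, the isometry `v` itself implements the equivalence.
-/

section Conjugation

open Matrix

variable {R m n : Type*} [Semiring R] [Fintype m] [Fintype n]

section Intertwining

variable [DecidableEq n] {v : Matrix m n R} {u : Matrix n m R} {a : Matrix n n R}
  {b : Matrix m m R}

theorem intertwines_of_conj_eq (huv : u * v = 1) (hconj : v * a * u = b) : v * a = b * v := by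
  rw [← hconj, Matrix.mul_assoc, huv, Matrix.mul_one]

theorem leftInverse_intertwines_of_conj_eq (huv : u * v = 1) (hconj : v * a * u = b) :
    a * u = u * b := by
  rw [← hconj, Matrix.mul_assoc, ← Matrix.mul_assoc, huv, Matrix.one_mul]

end Intertwining

variable [DecidableEq m] [DecidableEq n] {s : Set m} {S : Set R} {v : Matrix m n R}
  {u : Matrix n m R}

theorem commute_apply_of_mul_scalar_eq (hone : 1 ∈ S)
    (h : ∀ x ∈ S, v * scalar n x = diagonal (s.indicator fun _ => x) * v) (i : m) (j : n) :
    ∀ x ∈ S, Commute (v i j) x := by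
  intro x hx
  have hentry : ∀ y ∈ S, v i j * y = s.indicator (fun _ => y) i * v i j := fun y hy => by
    simpa using congr_fun₂ (h y hy) i j
  by_cases hi : i ∈ s
  · simpa [hi, commute_iff_eq] using hentry x hx
  · have hzero : v i j = 0 := by simpa [hi] using hentry 1 hone
    simp [hzero]

theorem commute_apply_of_scalar_mul_eq (hone : 1 ∈ S)
    (h : ∀ x ∈ S, scalar n x * u = u * diagonal (s.indicator fun _ => x)) (j : n) (i : m) :
    ∀ x ∈ S, Commute (u j i) x := by
  intro x hx
  have hentry : ∀ y ∈ S, y * u j i = u j i * s.indicator (fun _ => y) i := fun y hy => by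
    simpa using congr_fun₂ (h y hy) j i
  by_cases hi : i ∈ s
  · simpa [hi, commute_iff_eq] using (hentry x hx).symm
  · have hzero : u j i = 0 := by simpa [hi] using hentry 1 hone
    simp [hzero]

theorem isometry_entries_in_commutant_properly_infinite_general (hone : 1 ∈ S) (huv : u * v = 1)
    (hconj : ∀ x ∈ S, v * scalar n x * u = diagonal (s.indicator fun _ => x)) :
    v * u = diagonal (s.indicator fun _ => 1) ∧
    (∀ i j, ∀ x ∈ S, Commute (v i j) x) ∧ ∀ j i, ∀ x ∈ S, Commute (u j i) x := by
  refine ⟨?_, ?_, ?_⟩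
  · simpa using hconj 1 hone
  · exact commute_apply_of_mul_scalar_eq hone fun x hx =>
      intertwines_of_conj_eq huv (hconj x hx)
  · exact commute_apply_of_scalar_mul_eq hone fun x hx =>
      leftInverse_intertwines_of_conj_eq huv (hconj x hx)

end Conjugation

theorem scalar_fin_two {R : Type*} [Semiring R] (x : R) :
    Matrix.scalar (Fin 2) x = Matrix.diagonal ![x, x] := by
  ext i j
  fin_cases i <;> fin_cases j <;> rfl

theorem indicator_singleton_zero_fin_two {M : Type*} [Zero M] (x : M) :
    Set.indicator {(0 : Fin 2)} (fun _ => x) = ![x, 0] := by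
  ext i
  fin_cases i <;> simp

/-- (Paper's Lemma 2.2(a), with the absorption hypothesis replaced by its
consequence, the existence of `v`.) If `v ∈ M₂(C)` is an isometry with
`v diag(x,x) v* = diag(x,0)` for all `x` in the unital C*-subalgebra `A`, then
`v v* = diag(1,0)`, all entries of `v` lie in the relative commutant `D` of `A`, and in
`M₂(D)` the projection `diag(1,1)` is Murray–von Neumann equivalent to `diag(1,0)`;
in particular the unit of `D` is properly infinite. -/
theorem isometry_entries_in_commutant_properly_infinite
    {C : Type*} [CStarAlgebra C]
    (S : StarSubalgebra ℂ C) (hS_closed : IsClosed (S : Set C))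
    (v : Matrix (Fin 2) (Fin 2) C)
    (hv_isometry : star v * v = 1)
    (hv_conj : ∀ x ∈ S,
      v * Matrix.diagonal ![x, x] * star v = Matrix.diagonal ![x, 0]) :
    v * star v = Matrix.diagonal ![1, 0] ∧
    (∀ i j, ∀ x ∈ S, v i j * x = x * v i j) ∧
    ∃ w : Matrix (Fin 2) (Fin 2) C,
      (∀ i j, ∀ x ∈ S, w i j * x = x * w i j) ∧
      star w * w = 1 ∧ w * star w = Matrix.diagonal ![1, 0] := by
  simp only [← scalar_fin_two, ← indicator_singleton_zero_fin_two] at hv_conj ⊢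
  obtain ⟨hrange, hcomm, -⟩ :=
    isometry_entries_in_commutant_properly_infinite_general (one_mem S) hv_isometry hv_conj
  exact ⟨hrange, hcomm, v, hcomm, hv_isometry, hrange⟩
end

section
/- Let D be a unital C*-algebra and suppose there exists v ∈ M₂(D) with v*v = 1_{M₂(D)} and vv* = diag(1, 0). Then for every integer n ≥ 1 there is a *-isomorphism between Mₙ(D) and D. -/
/-!
The hypothesis says that the unit of `M₂(D)` is Murray–von Neumann equivalent to `diag(1, 0)`,
hence to the unit of `M₁(D) = D`. Equivalence is additive under block sums, so
`1ₙ₊₁ = 1ₙ ⊕ 1₁ ∼ 1₁ ⊕ 1₁ = 1₂ ∼ 1₁`, and by induction `1ₙ ∼ 1₁` for all `n ≥ 1`. A witness of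
`1ₙ ∼ 1₁` is a unitary `1 × n` matrix, and conjugation by it identifies `Mₙ(D)` with `M₁(D)`.
-/

open scoped Matrix

section NonUnitalSemiring

variable {A k l m n : Type*} [NonUnitalSemiring A] [StarRing A]
  [Fintype k] [Fintype l] [Fintype m] [Fintype n]

/-- Murray–von Neumann equivalence of projections in matrix algebras over a star ring. The two
matrices may have different sizes, so the implementing partial isometry is rectangular. That `p`
and `q` are projections is not part of the definition. -/
def MurrayVonNeumannEquiv (p : Matrix m m A) (q : Matrix n n A) : Prop :=
  ∃ v : Matrix n m A, vᴴ * v = p ∧ v * vᴴ = q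

namespace MurrayVonNeumannEquiv

theorem trans {p : Matrix k k A} {q : Matrix m m A} {r : Matrix n n A}
    (hpq : MurrayVonNeumannEquiv p q) (hqr : MurrayVonNeumannEquiv q r)
    (hp : IsIdempotentElem p) (hr : IsIdempotentElem r) : MurrayVonNeumannEquiv p r := by
  obtain ⟨v, rfl, rfl⟩ := hpq
  obtain ⟨w, hw, rfl⟩ := hqr
  refine ⟨w * v, ?_, ?_⟩
  · calc
      (w * v)ᴴ * (w * v) = vᴴ * (wᴴ * w) * v := by
        simp only [Matrix.conjTranspose_mul, Matrix.mul_assoc]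
      _ = vᴴ * v * (vᴴ * v) := by simp only [hw, Matrix.mul_assoc]
      _ = vᴴ * v := hp
  · calc
      w * v * (w * v)ᴴ = w * (v * vᴴ) * wᴴ := by
        simp only [Matrix.conjTranspose_mul, Matrix.mul_assoc]
      _ = w * wᴴ * (w * wᴴ) := by simp only [← hw, Matrix.mul_assoc]
      _ = w * wᴴ := hr

theorem fromBlocks {p : Matrix k k A} {q : Matrix l l A} {p' : Matrix m m A} {q' : Matrix n n A}
    (h : MurrayVonNeumannEquiv p q) (h' : MurrayVonNeumannEquiv p' q') :
    MurrayVonNeumannEquiv (Matrix.fromBlocks p 0 0 p') (Matrix.fromBlocks q 0 0 q') := by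
  obtain ⟨v, rfl, rfl⟩ := h
  obtain ⟨w, rfl, rfl⟩ := h'
  exact ⟨Matrix.fromBlocks v 0 0 w, by
    simp [Matrix.fromBlocks_conjTranspose, Matrix.fromBlocks_multiply], by
    simp [Matrix.fromBlocks_conjTranspose, Matrix.fromBlocks_multiply]⟩

end MurrayVonNeumannEquiv

end NonUnitalSemiring

section Semiring

variable {A k l m n : Type*} [Semiring A] [StarRing A]
  [Fintype k] [Fintype l] [Fintype m] [Fintype n]
  [DecidableEq k] [DecidableEq l] [DecidableEq m] [DecidableEq n]

namespace MurrayVonNeumannEquiv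

variable (A) in
theorem one_of_equiv (e : m ≃ n) :
    MurrayVonNeumannEquiv (1 : Matrix m m A) (1 : Matrix n n A) :=
  ⟨(1 : Matrix m m A).submatrix e.symm id, by
    simp [Matrix.conjTranspose_submatrix], by
    simp [Matrix.conjTranspose_submatrix, ← Matrix.submatrix_mul _ _ _ id _ Function.bijective_id]⟩

theorem one_sum_one (h : MurrayVonNeumannEquiv (1 : Matrix k k A) (1 : Matrix l l A))
    (h' : MurrayVonNeumannEquiv (1 : Matrix m m A) (1 : Matrix n n A)) :
    MurrayVonNeumannEquiv (1 : Matrix (k ⊕ m) (k ⊕ m) A) (1 : Matrix (l ⊕ n) (l ⊕ n) A) := by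
  simpa only [Matrix.fromBlocks_one] using h.fromBlocks h'

theorem single_one_of_unique [Unique n] (i : m) :
    MurrayVonNeumannEquiv (Matrix.single i i (1 : A)) (1 : Matrix n n A) := by
  refine ⟨Matrix.single default i 1, by simp, ?_⟩
  ext a b
  obtain rfl := Unique.eq_default a
  obtain rfl := Unique.eq_default b
  simp

theorem one_fin_of_one_two (h : MurrayVonNeumannEquiv (1 : Matrix (Fin 2) (Fin 2) A)
      (1 : Matrix (Fin 1) (Fin 1) A)) {n : ℕ} (hn : 1 ≤ n) :
    MurrayVonNeumannEquiv (1 : Matrix (Fin n) (Fin n) A) (1 : Matrix (Fin 1) (Fin 1) A) := by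
  induction n, hn using Nat.le_induction with
  | base => exact one_of_equiv A (Equiv.refl _)
  | succ n _ ih =>
    have succ_equiv_sum : MurrayVonNeumannEquiv (1 : Matrix (Fin (n + 1)) (Fin (n + 1)) A)
        (1 : Matrix (Fin n ⊕ Fin 1) (Fin n ⊕ Fin 1) A) :=
      one_of_equiv A finSumFinEquiv.symm
    have sum_equiv_sum : MurrayVonNeumannEquiv (1 : Matrix (Fin n ⊕ Fin 1) (Fin n ⊕ Fin 1) A)
        (1 : Matrix (Fin 1 ⊕ Fin 1) (Fin 1 ⊕ Fin 1) A) :=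
      ih.one_sum_one (one_of_equiv A (Equiv.refl _))
    have sum_equiv_two : MurrayVonNeumannEquiv (1 : Matrix (Fin 1 ⊕ Fin 1) (Fin 1 ⊕ Fin 1) A)
        (1 : Matrix (Fin 2) (Fin 2) A) :=
      one_of_equiv A finSumFinEquiv
    have sum_equiv_one := sum_equiv_sum.trans (sum_equiv_two.trans h .one .one) .one .one
    exact succ_equiv_sum.trans sum_equiv_one .one .one

theorem nonempty_starAlgEquiv {R : Type*} [CommSemiring R] [Algebra R A]
    (h : MurrayVonNeumannEquiv (1 : Matrix m m A) (1 : Matrix n n A)) :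
    Nonempty (Matrix m m A ≃⋆ₐ[R] Matrix n n A) := by
  obtain ⟨v, hv, hv'⟩ := h
  have conj_mul (M N : Matrix m m A) : v * M * vᴴ * (v * N * vᴴ) = v * (M * N) * vᴴ := calc
    v * M * vᴴ * (v * N * vᴴ) = v * (M * (vᴴ * v) * N) * vᴴ := by simp only [Matrix.mul_assoc]
    _ = v * (M * N) * vᴴ := by rw [hv, Matrix.mul_one]
  exact ⟨
    { toFun := fun M => v * M * vᴴ
      invFun := fun N => vᴴ * N * v
      left_inv := fun M => calc
        vᴴ * (v * M * vᴴ) * v = vᴴ * v * M * (vᴴ * v) := by simp only [Matrix.mul_assoc]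
        _ = M := by rw [hv, Matrix.one_mul, Matrix.mul_one]
      right_inv := fun N => calc
        v * (vᴴ * N * v) * vᴴ = v * vᴴ * N * (v * vᴴ) := by simp only [Matrix.mul_assoc]
        _ = N := by rw [hv', Matrix.one_mul, Matrix.mul_one]
      map_mul' := fun M N => (conj_mul M N).symm
      map_add' := fun M N => by rw [Matrix.mul_add, Matrix.add_mul]
      map_star' := fun M => by
        simp only [Matrix.star_eq_conjTranspose, Matrix.conjTranspose_mul,
          Matrix.conjTranspose_conjTranspose, Matrix.mul_assoc]
      map_smul' := fun c M => by rw [Matrix.mul_smul, Matrix.smul_mul] }⟩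

end MurrayVonNeumannEquiv

end Semiring

/-- The identification of a `1 × 1` matrix with its entry, as a star algebra equivalence. The
`Fintype` instance is arbitrary, whereas `Matrix.uniqueAlgEquiv` fixes `Unique.fintype`. -/
def uniqueMatrixStarAlgEquiv (R A ι : Type*) [NonUnitalNonAssocSemiring A] [Star A] [SMul R A]
    [Unique ι] [Fintype ι] : Matrix ι ι A ≃⋆ₐ[R] A where
  __ := Matrix.uniqueEquiv
  map_mul' M N := by simp [Matrix.mul_apply]
  map_add' M N := by simp
  map_star' M := by simp [Matrix.star_apply]
  map_smul' c M := by simp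

theorem matrix_algebra_iso_of_one_equiv_two_general
    {R A : Type*} [CommSemiring R] [Semiring A] [StarRing A] [Algebra R A]
    (v : Matrix (Fin 2) (Fin 2) A)
    (hv_isometry : star v * v = 1)
    (hv_range : v * star v = Matrix.diagonal ![1, 0])
    {n : ℕ} (hn : 1 ≤ n) :
    Nonempty (Matrix (Fin n) (Fin n) A ≃⋆ₐ[R] A) := by
  have diagonal_eq : Matrix.diagonal ![1, 0] = Matrix.single (0 : Fin 2) 0 (1 : A) := by
    ext i j
    fin_cases i <;> fin_cases j <;> simp
  have two_equiv_single : MurrayVonNeumannEquiv (1 : Matrix (Fin 2) (Fin 2) A)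
      (Matrix.single (0 : Fin 2) 0 1) :=
    ⟨v, hv_isometry, hv_range.trans diagonal_eq⟩
  have two_equiv_one : MurrayVonNeumannEquiv (1 : Matrix (Fin 2) (Fin 2) A)
      (1 : Matrix (Fin 1) (Fin 1) A) :=
    two_equiv_single.trans (.single_one_of_unique 0) .one .one
  obtain ⟨e⟩ := (two_equiv_one.one_fin_of_one_two hn).nonempty_starAlgEquiv (R := R)
  exact ⟨e.trans (uniqueMatrixStarAlgEquiv R A (Fin 1))⟩

/-- Let `D` be a unital C*-algebra and suppose there exists `v ∈ M₂(D)` with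
`v* v = 1` and `v v* = diag(1, 0)`. Then for every integer `n ≥ 1` there is a *-isomorphism
between `Mₙ(D)` and `D`. -/
theorem matrix_algebra_iso_of_one_equiv_two
    {D : Type*} [CStarAlgebra D]
    (v : Matrix (Fin 2) (Fin 2) D)
    (hv_isometry : star v * v = 1)
    (hv_range : v * star v = Matrix.diagonal ![1, 0]) :
    ∀ n : ℕ, 1 ≤ n → Nonempty (Matrix (Fin n) (Fin n) D ≃⋆ₐ[ℂ] D) :=
  fun _ hn => matrix_algebra_iso_of_one_equiv_two_general v hv_isometry hv_range hn
end

section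
/- Let D be a unital C*-algebra and let u, s ∈ D be unitaries such that s is homotopic to 1 within the unitary group of D and diag(u, 1) is homotopic to diag(1, 1) within the unitary group of M₂(D). Suppose there exists w ∈ M₂(D) with w*w = 1_{M₂(D)}, ww* = diag(1, 0), and w·diag(u, s)·w* = diag(u, 0). Then u is homotopic to 1 within the unitary group of D. -/
/-!
If `w* w = 1` and `w w* = e₀₀`, then `X ↦ (w X w*)₀₀` is a continuous unital `*`-homomorphism
`M₂(D) → D`, so it carries paths of unitaries to paths of unitaries. Deforming `s` to `1` joins
`diag(u, s)` to `diag(u, 1)`, which is joined to `1`; the image of this path joins `u` to `1`.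
-/

open Matrix

section Algebra

theorem mul_single_one_mul_apply {l m n R : Type*} [DecidableEq m] [Fintype m]
    [NonAssocSemiring R] (A : Matrix l m R) (B : Matrix m n R) (i : l) (j : n) (k : m) :
    (A * single k k (1 : R) * B) i j = A i k * B k j := by
  rw [mul_apply, Finset.sum_eq_single k] <;> simp +contextual

variable {m n R : Type*} [DecidableEq m] [DecidableEq n] [Fintype m] [Fintype n]
  [Semiring R] [StarRing R]

theorem diagonal_mem_unitary_iff {d : n → R} :
    diagonal d ∈ unitary (Matrix n n R) ↔ ∀ i, d i ∈ unitary R := by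
  simp only [Unitary.mem_iff, star_eq_conjTranspose, diagonal_conjTranspose,
    diagonal_mul_diagonal, diagonal_eq_one, funext_iff, Pi.star_apply, Pi.one_apply, forall_and]

/-- The unital `*`-homomorphism `X ↦ (w X wᴴ)ᵢᵢ`, compressing to the `i`-th diagonal corner after
conjugation by an isometry `w` whose range projection is the matrix unit `eᵢᵢ`. It is bundled as a
map of `*`-monoids, without additivity, which is the structure that acts on unitaries. -/
def cornerCompression (w : Matrix m n R) (i : m) (hw_isometry : wᴴ * w = 1)
    (hw_range : w * wᴴ = single i i 1) : Matrix n n R →⋆* R where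
  toFun X := (w * X * wᴴ) i i
  map_one' := by simp [hw_range]
  map_mul' X Y := by
    have insert_range : w * (X * Y) * wᴴ = w * X * wᴴ * single i i 1 * (w * Y * wᴴ) :=
      calc w * (X * Y) * wᴴ = w * X * (wᴴ * w) * (wᴴ * w) * Y * wᴴ := by
            simp only [hw_isometry, Matrix.mul_one, Matrix.mul_assoc]
        _ = w * X * wᴴ * single i i 1 * (w * Y * wᴴ) := by
            simp only [← hw_range, Matrix.mul_assoc]
    rw [insert_range, mul_single_one_mul_apply]
  map_star' X := by
    rw [← conjTranspose_apply]
    simp only [star_eq_conjTranspose, conjTranspose_mul, conjTranspose_conjTranspose,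
      Matrix.mul_assoc]

end Algebra

section Homotopy

theorem joinedIn_unitary_map {R S : Type*} [Monoid R] [StarMul R] [TopologicalSpace R]
    [Monoid S] [StarMul S] [TopologicalSpace S] {f : R →⋆* S} (hf : Continuous f) {x y : R}
    (h : JoinedIn (unitary R : Set R) x y) : JoinedIn (unitary S : Set S) (f x) (f y) :=
  (h.map hf).mono (Set.image_subset_iff.2 fun _ hz ↦ Unitary.map_mem f hz)

variable {m n R : Type*} [DecidableEq m] [DecidableEq n] [Fintype m] [Fintype n]
  [Semiring R] [StarRing R] [TopologicalSpace R]

theorem joinedIn_unitary_diagonal {d e : n → R}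
    (h : ∀ i, JoinedIn (unitary R : Set R) (d i) (e i)) :
    JoinedIn (unitary (Matrix n n R) : Set (Matrix n n R)) (diagonal d) (diagonal e) :=
  ((JoinedIn.pi h).map continuous_id.matrix_diagonal).mono <|
    Set.image_subset_iff.2 fun _ hz ↦ diagonal_mem_unitary_iff.2 fun i ↦ hz i trivial

theorem continuous_cornerCompression [IsTopologicalSemiring R] (w : Matrix m n R) (i : m)
    (hw_isometry : wᴴ * w = 1) (hw_range : w * wᴴ = single i i 1) :
    Continuous (cornerCompression w i hw_isometry hw_range) :=
  ((continuous_const.matrix_mul continuous_id).matrix_mul continuous_const).matrix_elem i i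

end Homotopy

theorem unitary_homotopic_to_one_of_conjugation_general
    {D : Type*} [Semiring D] [StarRing D] [TopologicalSpace D] [IsTopologicalSemiring D]
    {u s : D} (hs : JoinedIn (unitary D : Set D) s 1)
    (hdiag : JoinedIn (unitary (Matrix (Fin 2) (Fin 2) D) : Set (Matrix (Fin 2) (Fin 2) D))
      (diagonal ![u, 1]) 1)
    {w : Matrix (Fin 2) (Fin 2) D} (hw_isometry : star w * w = 1)
    (hw_range : w * star w = diagonal ![1, 0])
    (hw_conj : w * diagonal ![u, s] * star w = diagonal ![u, 0]) :
    JoinedIn (unitary D : Set D) u 1 := by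
  have hu : u ∈ unitary D := diagonal_mem_unitary_iff.1 hdiag.source_mem 0
  have deform_s : JoinedIn (unitary (Matrix (Fin 2) (Fin 2) D) : Set (Matrix (Fin 2) (Fin 2) D))
      (diagonal ![u, s]) (diagonal ![u, 1]) :=
    joinedIn_unitary_diagonal (Fin.forall_fin_two.2 ⟨.refl hu, hs⟩)
  have range_eq_single : w * wᴴ = single 0 0 1 := by
    rw [← star_eq_conjTranspose, hw_range, ← diagonal_single]
    congr 1
    ext i
    fin_cases i <;> rfl
  let φ := cornerCompression w 0 hw_isometry range_eq_single
  have compress_diagonal : φ (diagonal ![u, s]) = u := congr_fun₂ hw_conj 0 0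
  have compressed := joinedIn_unitary_map
    (continuous_cornerCompression w 0 hw_isometry range_eq_single) (deform_s.trans hdiag)
  rwa [compress_diagonal, map_one] at compressed

/-- (The concluding conjugation argument in the paper's Lemmas 2.4 and 2.9.)
Let `u, s` be unitaries in a unital C*-algebra `D` such that `s` is homotopic to `1` in the
unitary group of `D` and `diag(u,1)` is homotopic to `diag(1,1)` in the unitary group of
`M₂(D)`. If there is `w ∈ M₂(D)` with `w* w = 1`, `w w* = diag(1,0)`, and
`w diag(u,s) w* = diag(u,0)`, then `u` is homotopic to `1` in the unitary group of `D`. -/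
theorem unitary_homotopic_to_one_of_conjugation
    {D : Type*} [CStarAlgebra D]
    (u s : D) (hu : u ∈ unitary D) (hs : s ∈ unitary D)
    (hs_homotopic : Joined (⟨s, hs⟩ : unitary D) 1)
    (hdiag : Matrix.diagonal ![u, 1] ∈ unitary (Matrix (Fin 2) (Fin 2) D))
    (hdiag_homotopic :
      Joined (⟨Matrix.diagonal ![u, 1], hdiag⟩ : unitary (Matrix (Fin 2) (Fin 2) D)) 1)
    (w : Matrix (Fin 2) (Fin 2) D)
    (hw_isometry : star w * w = 1)
    (hw_range : w * star w = Matrix.diagonal ![1, 0])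
    (hw_conj : w * Matrix.diagonal ![u, s] * star w = Matrix.diagonal ![u, 0]) :
    Joined (⟨u, hu⟩ : unitary D) 1 :=
  (joinedIn_iff_joined hu (one_mem _)).1 <| unitary_homotopic_to_one_of_conjugation_general
    ((joinedIn_iff_joined hs (one_mem _)).2 hs_homotopic)
    ((joinedIn_iff_joined hdiag (one_mem _)).2 hdiag_homotopic) hw_isometry hw_range hw_conj
end

section
/- Let π : M → N be a surjective *-homomorphism between C*-algebras and let b ∈ M be a positive element. Then for every positive contraction y in the norm closure of { π(b)·z·π(b) : z ∈ N } there exists a positive contraction x in the norm closure of { b·m·b : m ∈ M } with π(x) = y. -/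
/-! The range of a `⋆`-homomorphism `φ` of C⋆-algebras is closed: truncating a self-adjoint preimage
by functional calculus does not change its image, so every element of the range has a preimage of
norm at most twice its own, and such controlled preimages persist in the closure. Restricting `π` to
the closure of the corner `bMb`, which is a C⋆-algebra because `b` is self-adjoint, every element of
the closure of `π(b)Nπ(b)` has a preimage in it. For a positive contraction, truncating the real
part of a preimage to `[0, 1]` yields a positive contraction. -/

open Set
open scoped ComplexStarModule CStarAlgebra

section Corner

variable (R : Type*) {A : Type*} [CommSemiring R] [NonUnitalSemiring A] [StarRing A] [Module R A]
  [IsScalarTower R A A] [SMulCommClass R A A]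

/-- The corner `bAb` of a star algebra `A` at a self-adjoint element `b`, as a star subalgebra. Over
a C⋆-algebra its closure is the hereditary subalgebra generated by `b` when `b` is positive. -/
def starCorner (b : A) (hb : IsSelfAdjoint b) : NonUnitalStarSubalgebra R A where
  carrier := {w | ∃ a, w = b * a * b}
  add_mem' := by
    rintro _ _ ⟨a, rfl⟩ ⟨c, rfl⟩
    exact ⟨a + c, by rw [mul_add, add_mul]⟩
  zero_mem' := ⟨0, by rw [mul_zero, zero_mul]⟩
  mul_mem' := by
    rintro _ _ ⟨a, rfl⟩ ⟨c, rfl⟩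
    exact ⟨a * b * b * c, by simp only [mul_assoc]⟩
  smul_mem' := by
    rintro r _ ⟨a, rfl⟩
    exact ⟨r • a, by rw [mul_smul_comm, smul_mul_assoc]⟩
  star_mem' := by
    rintro _ ⟨a, rfl⟩
    exact ⟨star a, by simp only [star_mul, hb.star_eq, mul_assoc]⟩

theorem map_starCorner {B : Type*} [NonUnitalSemiring B] [StarRing B] [Module R B]
    [IsScalarTower R B B] [SMulCommClass R B B] (φ : A →⋆ₙₐ[R] B) (hφ : Function.Surjective φ)
    (b : A) (hb : IsSelfAdjoint b) :
    (starCorner R b hb).map φ = starCorner R (φ b) (hb.map φ) := by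
  have map_corner (a : A) : φ (b * a * b) = φ b * φ a * φ b := by rw [map_mul, map_mul]
  ext w
  constructor
  · rintro ⟨_, ⟨a, rfl⟩, rfl⟩
    exact ⟨φ a, map_corner a⟩
  · rintro ⟨z, rfl⟩
    obtain ⟨a, rfl⟩ := hφ z
    exact ⟨b * a * b, ⟨a, rfl⟩, map_corner a⟩

end Corner

section Quasispectrum

variable {A : Type*} [NonUnitalCStarAlgebra A] {a : A} {r : ℝ}

theorem norm_le_iff_quasispectrum_subset_Icc (ha : IsSelfAdjoint a) :
    ‖a‖ ≤ r ↔ quasispectrum ℝ a ⊆ Icc (-r) r := by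
  constructor
  · intro h t ht
    exact abs_le.mp <|
      (NonUnitalIsometricContinuousFunctionalCalculus.norm_quasispectrum_le a ht ha).trans h
  · intro h
    simpa only [cfcₙ_id ℝ a] using norm_cfcₙ_le (f := id) fun t ht ↦ abs_le.mpr (h ht)

theorem nonneg_and_norm_le_iff_quasispectrum_subset_Icc [PartialOrder A] [StarOrderedRing A] :
    0 ≤ a ∧ ‖a‖ ≤ r ↔ IsSelfAdjoint a ∧ quasispectrum ℝ a ⊆ Icc 0 r := by
  constructor
  · rintro ⟨h0, hr⟩
    have ha := IsSelfAdjoint.of_nonneg h0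
    exact ⟨ha, fun t ht ↦ ⟨quasispectrum_nonneg_of_nonneg a h0 t ht,
      ((norm_le_iff_quasispectrum_subset_Icc ha).mp hr ht).2⟩⟩
  · rintro ⟨ha, h⟩
    have hr : 0 ≤ r := (h (quasispectrum.zero_mem ℝ a)).2
    exact ⟨(StarOrderedRing.nonneg_iff_quasispectrum_nonneg (R := ℝ) a).mpr fun t ht ↦ (h ht).1,
      (norm_le_iff_quasispectrum_subset_Icc ha).mpr
        (h.trans (Icc_subset_Icc_left (neg_nonpos.mpr hr)))⟩

end Quasispectrum

section Lifting

variable {A B : Type*} [NonUnitalCStarAlgebra A] [NonUnitalCStarAlgebra B] (φ : A →⋆ₙₐ[ℂ] B)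

theorem exists_isSelfAdjoint_lift_quasispectrum_subset_Icc {y : B} (hy : y ∈ range φ)
    (hsa : IsSelfAdjoint y) {lo hi : ℝ} (hspec : quasispectrum ℝ y ⊆ Icc lo hi) :
    ∃ x, φ x = y ∧ IsSelfAdjoint x ∧ quasispectrum ℝ x ⊆ Icc lo hi := by
  obtain ⟨a, ha, rfl⟩ : ∃ a, IsSelfAdjoint a ∧ φ a = y := by
    obtain ⟨a, rfl⟩ := hy
    exact ⟨ℜ a, (ℜ a).2, (map_realPart φ a).trans hsa.coe_realPart⟩
  have hzero : (0 : ℝ) ∈ Icc lo hi := hspec (quasispectrum.zero_mem ℝ _)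
  have hle : lo ≤ hi := hzero.1.trans hzero.2
  let clamp : ℝ → ℝ := fun t ↦ projIcc lo hi hle t
  have clamp_cont : Continuous clamp := continuous_subtype_val.comp continuous_projIcc
  have clamp_of_mem {t : ℝ} (ht : t ∈ Icc lo hi) : clamp t = t :=
    congrArg Subtype.val (projIcc_of_mem hle ht)
  have clamp_zero : clamp 0 = 0 := clamp_of_mem hzero
  refine ⟨cfcₙ clamp a, ?_, cfcₙ_predicate _ _, ?_⟩
  · calc φ (cfcₙ clamp a)
      _ = cfcₙ clamp (φ a) := NonUnitalStarAlgHom.map_cfcₙ φ clamp a clamp_cont.continuousOn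
        clamp_zero (map_continuous φ) ha hsa
      _ = cfcₙ id (φ a) := cfcₙ_congr fun t ht ↦ clamp_of_mem (hspec ht)
      _ = φ a := cfcₙ_id ℝ _
  · rw [cfcₙ_map_quasispectrum clamp a clamp_cont.continuousOn clamp_zero ha]
    rintro _ ⟨t, -, rfl⟩
    exact (projIcc lo hi hle t).2

theorem exists_lift_norm_le_of_isSelfAdjoint {y : B} (hy : y ∈ range φ) (hsa : IsSelfAdjoint y) :
    ∃ x, φ x = y ∧ ‖x‖ ≤ ‖y‖ := by
  obtain ⟨x, hx, hxsa, hxspec⟩ := exists_isSelfAdjoint_lift_quasispectrum_subset_Icc φ hy hsa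
    ((norm_le_iff_quasispectrum_subset_Icc hsa).mp le_rfl)
  exact ⟨x, hx, (norm_le_iff_quasispectrum_subset_Icc hxsa).mpr hxspec⟩

theorem exists_lift_norm_le_two_mul {y : B} (hy : y ∈ range φ) :
    ∃ x, φ x = y ∧ ‖x‖ ≤ 2 * ‖y‖ := by
  obtain ⟨a, rfl⟩ := hy
  obtain ⟨u, hu, hu_norm⟩ :=
    exists_lift_norm_le_of_isSelfAdjoint φ ⟨_, map_realPart φ a⟩ (ℜ (φ a)).2
  obtain ⟨v, hv, hv_norm⟩ :=
    exists_lift_norm_le_of_isSelfAdjoint φ ⟨_, map_imaginaryPart φ a⟩ (ℑ (φ a)).2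
  refine ⟨u + Complex.I • v, ?_, ?_⟩
  · rw [map_add, map_smul, hu, hv, realPart_add_I_smul_imaginaryPart]
  · calc ‖u + Complex.I • v‖
      _ ≤ ‖u‖ + ‖v‖ := by
        simpa only [norm_smul, Complex.norm_I, one_mul] using norm_add_le u (Complex.I • v)
      _ ≤ ‖φ a‖ + ‖φ a‖ := add_le_add (hu_norm.trans (realPart.norm_le (φ a)))
        (hv_norm.trans (imaginaryPart.norm_le (φ a)))
      _ = 2 * ‖φ a‖ := (two_mul _).symm

theorem isClosed_range_nonUnitalStarAlgHom : IsClosed (range φ) := by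
  let f : NormedAddGroupHom A B :=
    (φ : A →+ B).mkNormedAddGroupHom 1 (by simpa using NonUnitalStarAlgHom.norm_apply_le φ)
  have hf : f.SurjectiveOnWith f.range 2 := fun _ hy ↦ exists_lift_norm_le_two_mul φ hy
  refine isClosed_of_closure_subset fun y hy ↦ ?_
  obtain ⟨x, hx, -⟩ := controlled_closure_of_complete two_pos one_pos hf y hy
  exact ⟨x, hx⟩

theorem topologicalClosure_map_eq_map_topologicalClosure (S : NonUnitalStarSubalgebra ℂ A) :
    (S.map φ).topologicalClosure = S.topologicalClosure.map φ := by
  refine le_antisymm ?_ (S.map_topologicalClosure_le (map_continuous φ))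
  have := S.isClosed_topologicalClosure
  let ι := NonUnitalStarSubalgebraClass.subtype S.topologicalClosure
  have range_eq : range (φ.comp ι) = φ '' S.topologicalClosure :=
    (range_comp φ ι).trans (congrArg (φ '' ·) Subtype.range_coe)
  have image_closed : IsClosed (φ '' S.topologicalClosure) :=
    range_eq ▸ isClosed_range_nonUnitalStarAlgHom (φ.comp ι)
  exact NonUnitalStarSubalgebra.topologicalClosure_minimal _
    (NonUnitalStarSubalgebra.map_mono S.le_topologicalClosure) image_closed

variable [PartialOrder A] [StarOrderedRing A] [PartialOrder B] [StarOrderedRing B]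

theorem exists_nonneg_lift_mem_topologicalClosure (S : NonUnitalStarSubalgebra ℂ A) {y : B}
    (hy : y ∈ (S.map φ).topologicalClosure) (hy0 : 0 ≤ y) {r : ℝ} (hyr : ‖y‖ ≤ r) :
    ∃ x ∈ S.topologicalClosure, 0 ≤ x ∧ ‖x‖ ≤ r ∧ φ x = y := by
  have := S.isClosed_topologicalClosure
  let ι := NonUnitalStarSubalgebraClass.subtype S.topologicalClosure
  have hy_range : y ∈ range (φ.comp ι) := by
    obtain ⟨a, ha, rfl⟩ := (topologicalClosure_map_eq_map_topologicalClosure φ S).le hy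
    exact ⟨⟨a, ha⟩, rfl⟩
  obtain ⟨hsa, hspec⟩ := nonneg_and_norm_le_iff_quasispectrum_subset_Icc.mp ⟨hy0, hyr⟩
  obtain ⟨x, hx, hxsa, hxspec⟩ :=
    exists_isSelfAdjoint_lift_quasispectrum_subset_Icc (φ.comp ι) hy_range hsa hspec
  obtain ⟨hx0, hxr⟩ := nonneg_and_norm_le_iff_quasispectrum_subset_Icc.mpr
    ⟨hxsa.map ι, (NonUnitalAlgHom.quasispectrum_apply_subset' ℂ ι x).trans hxspec⟩
  exact ⟨ι x, x.2, hx0, hxr, hx⟩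

end Lifting

theorem lift_positive_contraction_hereditary_general
    {M N : Type*} [NonUnitalCStarAlgebra M] [PartialOrder M] [StarOrderedRing M]
    [NonUnitalCStarAlgebra N] [PartialOrder N] [StarOrderedRing N]
    (π : M →⋆ₙₐ[ℂ] N) (hπ : Function.Surjective π)
    (b : M) (hb : IsSelfAdjoint b) :
    ∀ y ∈ closure {w : N | ∃ z : N, w = π b * z * π b}, 0 ≤ y → ‖y‖ ≤ 1 →
      ∃ x ∈ closure {w : M | ∃ m : M, w = b * m * b},
        0 ≤ x ∧ ‖x‖ ≤ 1 ∧ π x = y := by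
  intro y hy hy0 hy1
  have hy_map : y ∈ ((starCorner ℂ b hb).map π).topologicalClosure := by
    rwa [map_starCorner ℂ π hπ b hb]
  exact exists_nonneg_lift_mem_topologicalClosure π (starCorner ℂ b hb) hy_map hy0 hy1

/-- Let `π : M → N` be a surjective *-homomorphism between C*-algebras and
`b ∈ M` a positive element. Then every positive contraction `y` in the hereditary subalgebra
of `N` generated by `π b` lifts to a positive contraction `x` in the hereditary subalgebra
of `M` generated by `b` with `π x = y`. -/
theorem lift_positive_contraction_hereditary
    {M N : Type*} [NonUnitalCStarAlgebra M] [PartialOrder M] [StarOrderedRing M]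
    [NonUnitalCStarAlgebra N] [PartialOrder N] [StarOrderedRing N]
    (π : M →⋆ₙₐ[ℂ] N) (hπ : Function.Surjective π)
    (b : M) (hb : 0 ≤ b) :
    ∀ y ∈ closure {w : N | ∃ z : N, w = π b * z * π b}, 0 ≤ y → ‖y‖ ≤ 1 →
      ∃ x ∈ closure {w : M | ∃ m : M, w = b * m * b},
        0 ≤ x ∧ ‖x‖ ≤ 1 ∧ π x = y :=
  lift_positive_contraction_hereditary_general π hπ b (.of_nonneg hb)
end
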